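/- arXiv:2411.01131 — 4 statements merged into one kernel-verified Lean document; each statement's English description precedes it below -/
import Mathlib

section
/- Let n ≥ 1, let a, Δx ∈ ℝ, and define v ∈ ℝ^{2ⁿ} by v_k = a + k·Δx for k ∈ {0, …, 2ⁿ−1}. Then H^{⊗n} v = β₀·e₀ + ∑_{m=0}^{n−1} β_{2^m}·e_{2^m}, where e_j is the j-th standard basis vector, β₀ = 2^{n/2}·a + 2^{n/2−1}·(2ⁿ−1)·Δx, and β_{2^m} = −2^{n/2+m−1}·Δx. In particular H^{⊗n} v is supported only on the index 0 and the indices 2^m (which have Hamming weight 1). -/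
/-!
Substituting `k_m = (1 - (-1) ^ k_m) / 2` in `k = ∑ 2 ^ m k_m` writes `k` as a combination of the
constant Walsh function and the Walsh functions of index `2 ^ m`. The Walsh functions are
orthogonal and, up to the factor `2 ^ (-n / 2)`, are the rows of the transform, which therefore
sends the one of index `j` to `2 ^ (n / 2) • e_j`.
-/

/-- The value at `k` of the `i`-th Walsh function on `n` bits: the sign `(-1) ^ ⟨i, k⟩`, where
`⟨i, k⟩` counts the positions below `n` at which `i` and `k` both have a binary digit `1`. -/
def walsh (R : Type*) [CommRing R] (n i k : ℕ) : R :=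
  (-1) ^ ∑ m ∈ Finset.range n, if i.testBit m ∧ k.testBit m then 1 else 0

/-- The unnormalized Walsh–Hadamard matrix `2 ^ (n / 2) • H^{⊗n}`, with entries `±1`. -/
def walshMatrix (R : Type*) [CommRing R] (n : ℕ) : Matrix (Fin (2 ^ n)) (Fin (2 ^ n)) R :=
  Matrix.of fun i k => walsh R n i k

section Walsh

variable {R : Type*} [CommRing R] {n : ℕ}

lemma walsh_eq_prod (i k : ℕ) :
    walsh R n i k = ∏ m ∈ Finset.range n, if i.testBit m ∧ k.testBit m then -1 else 1 := by
  simp only [walsh, ← Finset.prod_pow_eq_pow_sum, pow_ite, pow_one, pow_zero]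

lemma walsh_comm (i k : ℕ) : walsh R n i k = walsh R n k i := by
  simp only [walsh, and_comm]

lemma walsh_zero_left (k : ℕ) : walsh R n 0 k = 1 := by
  simp [walsh]

lemma walsh_two_pow_left {m : ℕ} (hm : m < n) (k : ℕ) :
    walsh R n (2 ^ m) k = if k.testBit m then -1 else 1 := by
  simp only [walsh_eq_prod, Nat.testBit_two_pow, decide_eq_true_eq, ite_and]
  rw [Finset.prod_ite_eq, if_pos (Finset.mem_range.2 hm)]

lemma walsh_xor_right (i k l : ℕ) :
    walsh R n i (k ^^^ l) = walsh R n i k * walsh R n i l := by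
  simp only [walsh_eq_prod, ← Finset.prod_mul_distrib, Nat.testBit_xor]
  refine Finset.prod_congr rfl fun m _ => ?_
  cases i.testBit m <;> cases k.testBit m <;> cases l.testBit m <;> simp

lemma walsh_xor_left (i j k : ℕ) :
    walsh R n (i ^^^ j) k = walsh R n i k * walsh R n j k := by
  simp only [walsh_comm _ k, walsh_xor_right]

lemma sum_walsh_eq_zero {i : ℕ} (hi : i < 2 ^ n) (hi₀ : i ≠ 0) :
    ∑ k ∈ Finset.range (2 ^ n), walsh R n i k = 0 := by
  obtain ⟨m, hm⟩ := Nat.exists_testBit_of_ne_zero hi₀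
  have hmn : m < n :=
    (Nat.pow_lt_pow_iff_right one_lt_two).1 ((Nat.ge_two_pow_of_testBit hm).trans_lt hi)
  have walsh_flip (k : ℕ) : walsh R n i (k ^^^ 2 ^ m) = -walsh R n i k := by
    rw [walsh_xor_right, walsh_comm i (2 ^ m), walsh_two_pow_left hmn, if_pos hm, mul_neg_one]
  -- Flipping the `m`-th bit of `k` pairs off terms of opposite sign.
  refine Finset.sum_involution (fun k _ => k ^^^ 2 ^ m) (fun k _ => ?_) (fun k _ _ => ?_)
    (fun k hk => ?_) (fun k _ => Nat.xor_xor_cancel_right k (2 ^ m))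
  · rw [walsh_flip, add_neg_cancel]
  · intro h_fixed
    simpa using congrArg (Nat.testBit · m) h_fixed
  · exact Finset.mem_range.2 (Nat.xor_lt_two_pow (Finset.mem_range.1 hk)
      (Nat.pow_lt_pow_right one_lt_two hmn))

theorem sum_walsh_mul_walsh {i j : ℕ} (hi : i < 2 ^ n) (hj : j < 2 ^ n) :
    ∑ k ∈ Finset.range (2 ^ n), walsh R n i k * walsh R n j k = if i = j then 2 ^ n else 0 := by
  simp only [← walsh_xor_left]
  split_ifs with hij
  · simp [hij, walsh_zero_left]
  · exact sum_walsh_eq_zero (Nat.xor_lt_two_pow hi hj) (mt Nat.xor_eq_zero_iff.1 hij)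

theorem walshMatrix_mulVec_row (j : Fin (2 ^ n)) :
    (walshMatrix R n).mulVec ((walshMatrix R n).row j) = (2 : R) ^ n • Pi.single j 1 := by
  ext i
  calc ∑ k : Fin (2 ^ n), walsh R n i k * walsh R n j k
      = if (i : ℕ) = j then 2 ^ n else 0 := by
        rw [← sum_walsh_mul_walsh i.isLt j.isLt, Finset.sum_range]
    _ = ((2 : R) ^ n • (Pi.single j 1 : Fin (2 ^ n) → R)) i := by
        simp [Pi.single_apply, Fin.ext_iff]

end Walsh

lemma sum_two_pow_mul_testBit (n k : ℕ) :
    ∑ m ∈ Finset.range n, 2 ^ m * (k.testBit m).toNat = k % 2 ^ n := by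
  induction n with
  | zero => simp [Nat.mod_one]
  | succ n ih => rw [Finset.sum_range_succ, ih, Nat.mod_pow_succ, Nat.toNat_testBit]

theorem two_mul_natCast_eq_sub_sum_walsh {R : Type*} [CommRing R] {n k : ℕ} (hk : k < 2 ^ n) :
    2 * (k : R) = 2 ^ n - 1 - ∑ m ∈ Finset.range n, 2 ^ m * walsh R n (2 ^ m) k := by
  have walsh_eq_one_sub {m : ℕ} (hm : m < n) :
      walsh R n (2 ^ m) k = 1 - 2 * ((k.testBit m).toNat : R) := by
    rw [walsh_two_pow_left hm]
    cases k.testBit m <;> norm_num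
  have sum_two_pow : ∑ m ∈ Finset.range n, (2 : R) ^ m = 2 ^ n - 1 := by
    rw [← geom_sum_mul]
    norm_num
  have sum_bits : ∑ m ∈ Finset.range n, (2 : R) ^ m * ((k.testBit m).toNat : R) = k := by
    exact_mod_cast congrArg (Nat.cast (R := R))
      ((sum_two_pow_mul_testBit n k).trans (Nat.mod_eq_of_lt hk))
  calc 2 * (k : R)
      = 2 ^ n - 1 - (∑ m ∈ Finset.range n, (2 : R) ^ m
          - 2 * ∑ m ∈ Finset.range n, 2 ^ m * ((k.testBit m).toNat : R)) := by
        rw [sum_two_pow, sum_bits, sub_sub_cancel]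
    _ = 2 ^ n - 1 - ∑ m ∈ Finset.range n, 2 ^ m * walsh R n (2 ^ m) k := by
        rw [Finset.mul_sum, ← Finset.sum_sub_distrib]
        congr 1
        refine Finset.sum_congr rfl fun m hm => ?_
        rw [walsh_eq_one_sub (Finset.mem_range.1 hm)]
        ring

theorem affine_eq_sum_walshMatrix_row {K : Type*} [Field K] [NeZero (2 : K)] (n : ℕ) (a d : K) :
    (fun k : Fin (2 ^ n) => a + (k : ℕ) * d) =
      (a + (2 ^ n - 1) / 2 * d) • (walshMatrix K n).row 0
        + ∑ m : Fin n, (-(2 ^ (m : ℕ) / 2 * d)) •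
            (walshMatrix K n).row ⟨2 ^ (m : ℕ), Nat.pow_lt_pow_right one_lt_two m.isLt⟩ := by
  ext k
  have natCast_eq : (k : K) =
      (2 ^ n - 1 - ∑ m ∈ Finset.range n, 2 ^ m * walsh K n (2 ^ m) k) / 2 := by
    rw [← two_mul_natCast_eq_sub_sum_walsh k.isLt, mul_div_cancel_left₀ _ two_ne_zero]
  have sum_walsh_eq : ∑ m : Fin n, -(2 ^ (m : ℕ) / 2 * d) * walsh K n (2 ^ (m : ℕ)) k =
      -(d / 2) * ∑ m ∈ Finset.range n, 2 ^ m * walsh K n (2 ^ m) k := by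
    rw [Finset.mul_sum, Finset.sum_range]
    exact Finset.sum_congr rfl fun m _ => by ring
  simp only [Pi.add_apply, Finset.sum_apply, Pi.smul_apply, smul_eq_mul, Matrix.row_apply,
    walshMatrix, Matrix.of_apply, Fin.val_zero, walsh_zero_left, sum_walsh_eq,
    natCast_eq]
  ring

open Finset in
/-- The Walsh–Hadamard transform of the linear vector
`v_k = a + k·Δx` is supported on the index `0` (with coefficient
`2^{n/2}·a + 2^{n/2−1}(2ⁿ−1)·Δx`) and on the Hamming-weight-one indices `2^m`
(with coefficients `−2^{n/2+m−1}·Δx`). -/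
theorem walsh_hadamard_of_linear_vector (n : ℕ) (hn : 1 ≤ n) (a Δx : ℝ)
    (v : Fin (2 ^ n) → ℝ) (hv : ∀ k : Fin (2 ^ n), v k = a + (k : ℕ) * Δx)
    (Hn : Matrix (Fin (2 ^ n)) (Fin (2 ^ n)) ℝ)
    (hH : ∀ i κ : Fin (2 ^ n), Hn i κ =
      (Real.sqrt (2 ^ n))⁻¹ *
        (-1 : ℝ) ^ (∑ m ∈ Finset.range n,
          (if Nat.testBit (i : ℕ) m ∧ Nat.testBit (κ : ℕ) m then 1 else 0))) :
    Hn.mulVec v =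
      (Real.sqrt (2 ^ n) * a + Real.sqrt (2 ^ n) / 2 * ((2 : ℝ) ^ n - 1) * Δx) •
          (Pi.single (0 : Fin (2 ^ n)) 1 : Fin (2 ^ n) → ℝ)
        + ∑ m : Fin n,
            (-(Real.sqrt (2 ^ n) * 2 ^ (m : ℕ) / 2 * Δx)) •
              (Pi.single (⟨2 ^ (m : ℕ),
                Nat.pow_lt_pow_right one_lt_two m.isLt⟩ : Fin (2 ^ n)) 1 :
                  Fin (2 ^ n) → ℝ) := by
  have hHn : Hn = (Real.sqrt (2 ^ n))⁻¹ • walshMatrix ℝ n := Matrix.ext hH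
  have hHn_row (j : Fin (2 ^ n)) :
      Hn.mulVec ((walshMatrix ℝ n).row j) = Real.sqrt (2 ^ n) • Pi.single j 1 := by
    rw [hHn, Matrix.smul_mulVec, walshMatrix_mulVec_row, smul_smul, inv_mul_eq_div, Real.div_sqrt]
  rw [funext hv, affine_eq_sum_walshMatrix_row, Matrix.mulVec_add, Matrix.mulVec_sum]
  simp only [Matrix.mulVec_smul, hHn_row, smul_smul]
  congr 1
  · congr 1
    ring
  · refine Finset.sum_congr rfl fun m _ => ?_
    congr 1
    ring
end

section
/- Let h ≥ 1, let U_S be a unitary 2^h × 2^h complex matrix with first column ψ = U_S e₀, let p ∈ {0,1}, and let W_p, G_p be the operators on ℂ^{2^h} ⊗ ℂ² ⊗ ℂ^{2^h} defined by W_p = H̃·S̃^p·U_Copy·U_C^S·H̃ and G_p = W_p·R·W_p†·Z̃ (with H̃, S̃, Z̃, R, U_C^S, U_Copy as in the context). Define on ℂ² ⊗ (ℂ^{2^h} ⊗ ℂ² ⊗ ℂ^{2^h}) the operator U^{(S)}_{(p)} = ((XZX) ⊗ I)·(H ⊗ W_p†)·(|0⟩⟨0| ⊗ G_p + |1⟩⟨1|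 ⊗ G_p†)·(H ⊗ W_p), where X = [[0,1],[1,0]], Z = diag(1,−1), H = (1/√2)[[1,1],[1,−1]] act on the first qubit. Then U^{(S)}_{(p)} is unitary, and for every k ∈ {0, …, 2^h−1}, writing U^{(S)}_{(p)}(e₀ ⊗ e₀ ⊗ e₀ ⊗ e_k) = e₀ ⊗ u + e₁ ⊗ w with u, w ∈ ℂ^{2^h} ⊗ ℂ² ⊗ ℂ^{2^h}, one has exactly u = Re((−i)^p ψ_k) · (e₀ ⊗ e₀ ⊗ e_k). In particular (⟨0| ⊗ I) U^{(S)}_{(p)} (|0⟩ ⊗ I), restricted to the subspace spanned by the vectors e₀ ⊗ e₀ ⊗ e_k, acts diagonally with entries Re((−i)^p ψ_k), and the h+1 middle registers return to the state e₀ ⊗ e₀. -/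
namespace DiagBlockEncoding

open Matrix

/-- The index type of the space `ℂ^{2^h} ⊗ ℂ² ⊗ ℂ^{2^h}`. -/
abbrev Ix (h : ℕ) := Fin (2 ^ h) × Fin 2 × Fin (2 ^ h)

/-- The Hadamard gate `H = (1/√2)[[1,1],[1,−1]]`. -/
noncomputable def Hgate : Matrix (Fin 2) (Fin 2) ℂ :=
  (Real.sqrt 2 : ℂ)⁻¹ • !![1, 1; 1, -1]

/-- The phase gate `S = diag(1, i)`. -/
def Sgate : Matrix (Fin 2) (Fin 2) ℂ := !![1, 0; 0, Complex.I]

/-- The gate `Z = diag(1, −1)`. -/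
def Zgate : Matrix (Fin 2) (Fin 2) ℂ := !![1, 0; 0, -1]

/-- `H̃ = I ⊗ H ⊗ I`. -/
noncomputable def Htil (h : ℕ) : Matrix (Ix h) (Ix h) ℂ :=
  Matrix.of fun x y =>
    if x.1 = y.1 ∧ x.2.2 = y.2.2 then Hgate x.2.1 y.2.1 else 0

/-- `S̃ = I ⊗ S ⊗ I`. -/
def Stil (h : ℕ) : Matrix (Ix h) (Ix h) ℂ :=
  Matrix.of fun x y =>
    if x.1 = y.1 ∧ x.2.2 = y.2.2 then Sgate x.2.1 y.2.1 else 0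

/-- `Z̃ = I ⊗ Z ⊗ I`. -/
def Ztil (h : ℕ) : Matrix (Ix h) (Ix h) ℂ :=
  Matrix.of fun x y =>
    if x.1 = y.1 ∧ x.2.2 = y.2.2 then Zgate x.2.1 y.2.1 else 0

/-- `R = (I − 2·Π₀) ⊗ I`, where `Π₀` projects onto `e₀ ⊗ e₀` of the first two
registers. -/
def Rop (h : ℕ) : Matrix (Ix h) (Ix h) ℂ :=
  Matrix.of fun x y =>
    if x.2.2 = y.2.2 then
      (if x.1 = y.1 ∧ x.2.1 = y.2.1 then 1 else 0) -
        2 * (if x.1 = 0 ∧ x.2.1 = 0 ∧ y.1 = 0 ∧ y.2.1 = 0 then 1 else 0)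
    else 0

/-- `U_C^S = (U_S ⊗ |0⟩⟨0| + I ⊗ |1⟩⟨1|) ⊗ I`: apply `U_S` to the first
register controlled on the middle qubit being `|0⟩`. -/
def UCS (h : ℕ) (U : Matrix (Fin (2 ^ h)) (Fin (2 ^ h)) ℂ) :
    Matrix (Ix h) (Ix h) ℂ :=
  Matrix.of fun x y =>
    if x.2.2 = y.2.2 then
      (if x.2.1 = 0 ∧ y.2.1 = 0 then U x.1 y.1 else 0) +
        (if x.1 = y.1 ∧ x.2.1 = 1 ∧ y.2.1 = 1 then 1 else 0)
    else 0

/-- `U_Copy`: controlled on the middle qubit being `|1⟩`, XOR the last register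
into the first one: `e_j ⊗ e₁ ⊗ e_k ↦ e_{j⊕k} ⊗ e₁ ⊗ e_k`. -/
def UCopy (h : ℕ) : Matrix (Ix h) (Ix h) ℂ :=
  Matrix.of fun x y =>
    if x.2.1 = y.2.1 ∧ x.2.2 = y.2.2 ∧
        (x.1 : ℕ) = (if y.2.1 = 1 then (y.1 : ℕ) ^^^ (y.2.2 : ℕ) else (y.1 : ℕ))
    then 1 else 0

/-- `W_p = H̃ · S̃^p · U_Copy · U_C^S · H̃`. -/
noncomputable def Wop (h : ℕ) (U : Matrix (Fin (2 ^ h)) (Fin (2 ^ h)) ℂ)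
    (p : ℕ) : Matrix (Ix h) (Ix h) ℂ :=
  Htil h * (Stil h) ^ p * UCopy h * UCS h U * Htil h

/-- `G_p = W_p · R · W_p† · Z̃`. -/
noncomputable def Gop (h : ℕ) (U : Matrix (Fin (2 ^ h)) (Fin (2 ^ h)) ℂ)
    (p : ℕ) : Matrix (Ix h) (Ix h) ℂ :=
  Wop h U p * Rop h * (Wop h U p)ᴴ * Ztil h

/-- The basis vector `e₀ ⊗ e₀ ⊗ e_k` of `ℂ^{2^h} ⊗ ℂ² ⊗ ℂ^{2^h}`. -/
def eVec (h : ℕ) (k : Fin (2 ^ h)) : Ix h → ℂ :=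
  fun x => if x = (0, 0, k) then 1 else 0

/-- The gate `X = [[0,1],[1,0]]`. -/
def Xgate : Matrix (Fin 2) (Fin 2) ℂ := !![0, 1; 1, 0]

/-- Tensor product of a one-qubit gate with an operator on
`ℂ^{2^h} ⊗ ℂ² ⊗ ℂ^{2^h}`. -/
def qTens (h : ℕ) (A : Matrix (Fin 2) (Fin 2) ℂ) (B : Matrix (Ix h) (Ix h) ℂ) :
    Matrix (Fin 2 × Ix h) (Fin 2 × Ix h) ℂ :=
  Matrix.of fun x y => A x.1 y.1 * B x.2 y.2

/-- The controlled choice `|0⟩⟨0| ⊗ A + |1⟩⟨1| ⊗ B`. -/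
def ctrlChoice (h : ℕ) (A B : Matrix (Ix h) (Ix h) ℂ) :
    Matrix (Fin 2 × Ix h) (Fin 2 × Ix h) ℂ :=
  Matrix.of fun x y =>
    if x.1 = 0 ∧ y.1 = 0 then A x.2 y.2
    else if x.1 = 1 ∧ y.1 = 1 then B x.2 y.2
    else 0

/-- `U^{(S)}_{(p)} = ((XZX) ⊗ I)·(H ⊗ W_p†)·(|0⟩⟨0| ⊗ G_p + |1⟩⟨1| ⊗ G_p†)·(H ⊗ W_p)`. -/
noncomputable def USp (h : ℕ) (U : Matrix (Fin (2 ^ h)) (Fin (2 ^ h)) ℂ)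
    (p : ℕ) : Matrix (Fin 2 × Ix h) (Fin 2 × Ix h) ℂ :=
  qTens h (Xgate * Zgate * Xgate) 1 * qTens h Hgate (Wop h U p)ᴴ *
    ctrlChoice h (Gop h U p) (Gop h U p)ᴴ * qTens h Hgate (Wop h U p)

/-! With `A = W_p† Z̃ W_p`, the `|0⟩⟨0|` block of `U^{(S)}_{(p)}` is `-½ (R A + A R)`, since
`⟨0|XZX H|i⟩⟨i|H|0⟩ = -½` for both `i`. As `R` is `-1` on vectors `e₀ ⊗ e₀ ⊗ v` and `1` on their
orthogonal complement, this block sends `e₀ ⊗ e₀ ⊗ e_k` to the part of `A (e₀ ⊗ e₀ ⊗ e_k)` lying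
over `e₀ ⊗ e₀`. Evaluating `A` there is a Hadamard test: because `HZH = X`, its entries are the
symmetrised overlaps of the two branches `ψ ⊗ e_k` and `i^p e_k ⊗ e_k`. -/

open scoped Kronecker

section Unitary

theorem mul_add_mul_mem_unitary {R : Type*} [Ring R] [StarRing R] {p q a b : R}
    (hp : IsStarProjection p) (hpq : p + q = 1) (ha : a ∈ unitary R) (hb : b ∈ unitary R)
    (hap : Commute a p) (hbp : Commute b p) : a * p + b * q ∈ unitary R := by
  obtain rfl : q = 1 - p := eq_sub_of_add_eq' hpq
  have star_eq (a b : R) : star (a * p + b * (1 - p)) = p * star a + (1 - p) * star b := by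
    rw [star_add, star_mul, star_mul, hp.isSelfAdjoint.star_eq, hp.one_sub.isSelfAdjoint.star_eq]
  have comm_one_sub {c : R} (hc : Commute c p) : Commute c (1 - p) :=
    (Commute.one_right c).sub_right hc
  have mul_star_self {a b : R} (ha : a ∈ unitary R) (hb : b ∈ unitary R) (hap : Commute a p)
      (hbp : Commute b p) : (a * p + b * (1 - p)) * star (a * p + b * (1 - p)) = 1 :=
    calc (a * p + b * (1 - p)) * star (a * p + b * (1 - p))
        = a * (p * p) * star a + a * (p * (1 - p)) * star b + b * ((1 - p) * p) * star a +
            b * ((1 - p) * (1 - p)) * star b := by rw [star_eq]; noncomm_ring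
      _ = a * p * star a + b * (1 - p) * star b := by
          simp only [hp.isIdempotentElem.eq, hp.one_sub.isIdempotentElem.eq, hp.mul_one_sub_self,
            hp.one_sub_mul_self, mul_zero, zero_mul, add_zero]
      _ = p * (a * star a) + (1 - p) * (b * star b) := by
          rw [hap.eq, (comm_one_sub hbp).eq, mul_assoc, mul_assoc]
      _ = 1 := by
          rw [Unitary.mul_star_self_of_mem ha, Unitary.mul_star_self_of_mem hb, mul_one, mul_one,
            add_sub_cancel]
  have comm_star {c : R} (hc : Commute c p) : Commute (star c) p := by
    simpa only [hp.isSelfAdjoint.star_eq] using hc.star_star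
  have adjoint_eq : star (a * p + b * (1 - p)) = star a * p + star b * (1 - p) := by
    rw [star_eq, (comm_star hap).eq, (comm_one_sub (comm_star hbp)).eq]
  refine Unitary.mem_iff.2 ⟨?_, mul_star_self ha hb hap hbp⟩
  have h := mul_star_self (Unitary.star_mem ha) (Unitary.star_mem hb) (comm_star hap)
    (comm_star hbp)
  rwa [← adjoint_eq, star_star] at h

theorem kronecker_one_commute_one_kronecker {R m n : Type*} [CommSemiring R] [Fintype m]
    [Fintype n] [DecidableEq m] [DecidableEq n] (A : Matrix m m R) (B : Matrix n n R) :
    Commute (A ⊗ₖ (1 : Matrix n n R)) ((1 : Matrix m m R) ⊗ₖ B) := by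
  simp only [Commute, SemiconjBy, ← mul_kronecker_mul, Matrix.mul_one, Matrix.one_mul]

theorem isStarProjection_kronecker {R m n : Type*} [CommSemiring R] [StarRing R] [Fintype m]
    [Fintype n] {P : Matrix m m R} {Q : Matrix n n R} (hP : IsStarProjection P)
    (hQ : IsStarProjection Q) : IsStarProjection (P ⊗ₖ Q) where
  isIdempotentElem := by
    rw [IsIdempotentElem, ← mul_kronecker_mul, hP.isIdempotentElem, hQ.isIdempotentElem]
  isSelfAdjoint := by
    rw [IsSelfAdjoint, star_eq_conjTranspose, conjTranspose_kronecker, ← star_eq_conjTranspose,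
      ← star_eq_conjTranspose, hP.isSelfAdjoint, hQ.isSelfAdjoint]

theorem isStarProjection_single_one {R n : Type*} [Semiring R] [StarRing R] [Fintype n]
    [DecidableEq n] (i : n) : IsStarProjection (single i i (1 : R)) where
  isIdempotentElem := by simp [IsIdempotentElem]
  isSelfAdjoint := by simp [IsSelfAdjoint, star_eq_conjTranspose]

theorem diagonal_mem_unitaryGroup {R n : Type*} [CommRing R] [StarRing R] [Fintype n]
    [DecidableEq n] {d : n → R} (hd : ∀ i, d i ∈ unitary R) : diagonal d ∈ unitaryGroup n R := by
  rw [mem_unitaryGroup_iff, star_eq_conjTranspose, diagonal_conjTranspose, diagonal_mul_diagonal,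
    ← diagonal_one]
  exact congrArg diagonal (funext fun i => Unitary.mul_star_self_of_mem (hd i))

theorem permMatrix_mem_unitaryGroup {R n : Type*} [CommRing R] [StarRing R] [Fintype n]
    [DecidableEq n] (σ : Equiv.Perm n) : σ.permMatrix R ∈ unitaryGroup n R := by
  rw [mem_unitaryGroup_iff, star_eq_conjTranspose, conjTranspose_permMatrix, ← permMatrix_mul,
    inv_mul_cancel, permMatrix_one]

theorem star_mul_reflection_add_star_mul {R : Type*} [Ring R] [StarRing R] {w r z : R}
    (hw : w ∈ unitary R) (hr : IsSelfAdjoint r) (hz : IsSelfAdjoint z) :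
    star w * (w * r * star w * z + star (w * r * star w * z)) * w =
      r * (star w * z * w) + star w * z * w * r := by
  have hww : star w * w = 1 := Unitary.star_mul_self_of_mem hw
  have hadj : star (w * r * star w * z) = z * w * r * star w := by
    simp only [star_mul, star_star, hr.star_eq, hz.star_eq, mul_assoc]
  calc star w * (w * r * star w * z + star (w * r * star w * z)) * w
      = star w * w * (r * (star w * z * w)) + star w * z * w * r * (star w * w) := by
        rw [hadj]; noncomm_ring
    _ = r * (star w * z * w) + star w * z * w * r := by rw [hww, one_mul, mul_one]

end Unitary

section OneQubitGates

theorem inv_sqrt_two_mul_self : (Real.sqrt 2 : ℂ)⁻¹ * (Real.sqrt 2 : ℂ)⁻¹ = 1 / 2 := by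
  rw [← mul_inv, ← Complex.ofReal_mul, Real.mul_self_sqrt zero_le_two, Complex.ofReal_ofNat,
    one_div]

theorem star_mul_add_star_mul_inv_sqrt_two (a b : ℂ) :
    star ((Real.sqrt 2 : ℂ)⁻¹ * a) * ((Real.sqrt 2 : ℂ)⁻¹ * b) +
      star ((Real.sqrt 2 : ℂ)⁻¹ * b) * ((Real.sqrt 2 : ℂ)⁻¹ * a) = ((star b * a).re : ℂ) := by
  simp only [Complex.re_eq_add_conj, Complex.star_def, map_mul, map_inv₀, Complex.conj_ofReal,
    Complex.conj_conj]
  linear_combination (starRingEnd ℂ a * b + starRingEnd ℂ b * a) * inv_sqrt_two_mul_self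

theorem Hgate_mem_unitaryGroup : Hgate ∈ unitaryGroup (Fin 2) ℂ := by
  rw [mem_unitaryGroup_iff, star_eq_conjTranspose]
  ext i j
  fin_cases i <;> fin_cases j <;>
    norm_num [Hgate, Matrix.mul_apply, Fin.sum_univ_two, inv_sqrt_two_mul_self]

theorem Sgate_mem_unitaryGroup : Sgate ∈ unitaryGroup (Fin 2) ℂ := by
  rw [mem_unitaryGroup_iff, star_eq_conjTranspose]
  ext i j
  fin_cases i <;> fin_cases j <;> simp [Sgate, Matrix.mul_apply, Fin.sum_univ_two]

theorem Zgate_mem_unitaryGroup : Zgate ∈ unitaryGroup (Fin 2) ℂ := by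
  rw [mem_unitaryGroup_iff, star_eq_conjTranspose]
  ext i j
  fin_cases i <;> fin_cases j <;> simp [Zgate, Matrix.mul_apply, Fin.sum_univ_two]

theorem Xgate_mem_unitaryGroup : Xgate ∈ unitaryGroup (Fin 2) ℂ := by
  rw [mem_unitaryGroup_iff, star_eq_conjTranspose]
  ext i j
  fin_cases i <;> fin_cases j <;> simp [Xgate, Matrix.mul_apply, Fin.sum_univ_two]

theorem isHermitian_Zgate : Zgate.IsHermitian := by
  ext i j
  fin_cases i <;> fin_cases j <;> simp [Zgate]

theorem Hgate_conjTranspose_mul_Zgate_mul_Hgate : Hgateᴴ * Zgate * Hgate = Xgate := by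
  ext i j
  fin_cases i <;> fin_cases j <;>
    norm_num [Hgate, Zgate, Xgate, Matrix.mul_apply, Fin.sum_univ_two, inv_sqrt_two_mul_self]

theorem XZX_mul_Hgate_mul_single_mul_Hgate_apply_zero_zero (i : Fin 2) :
    (Xgate * Zgate * Xgate * Hgate * single i i 1 * Hgate : Matrix (Fin 2) (Fin 2) ℂ) 0 0 =
      -(1 / 2) := by
  simp only [Matrix.mul_apply, Fin.sum_univ_two]
  fin_cases i <;> simp [Xgate, Zgate, Hgate, inv_sqrt_two_mul_self]

theorem single_zero_add_single_one {R : Type*} [Semiring R] :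
    (single 0 0 1 + single 1 1 1 : Matrix (Fin 2) (Fin 2) R) = 1 := by
  rw [← Fin.sum_univ_two (fun i => single i i (1 : R)), sum_single_one]

end OneQubitGates

section Registers

variable (h : ℕ) (U : Matrix (Fin (2 ^ h)) (Fin (2 ^ h)) ℂ)

theorem of_ite_eq_one_kronecker_kronecker_one {R ι κ μ : Type*} [NonAssocSemiring R]
    [DecidableEq ι] [DecidableEq μ] (A : Matrix κ κ R) :
    (of fun x y : ι × κ × μ => if x.1 = y.1 ∧ x.2.2 = y.2.2 then A x.2.1 y.2.1 else 0) =
      1 ⊗ₖ (A ⊗ₖ 1) := by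
  ext x y
  simp only [of_apply, kroneckerMap_apply, one_apply, mul_ite, ite_mul, mul_one, one_mul, mul_zero,
    zero_mul]
  split_ifs <;> simp_all

theorem Htil_eq_kronecker : Htil h = 1 ⊗ₖ (Hgate ⊗ₖ 1) :=
  of_ite_eq_one_kronecker_kronecker_one Hgate

theorem Stil_eq_kronecker : Stil h = 1 ⊗ₖ (Sgate ⊗ₖ 1) :=
  of_ite_eq_one_kronecker_kronecker_one Sgate

theorem Ztil_eq_kronecker : Ztil h = 1 ⊗ₖ (Zgate ⊗ₖ 1) :=
  of_ite_eq_one_kronecker_kronecker_one Zgate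

theorem one_kronecker_kronecker_one_mem_unitaryGroup {R ι κ μ : Type*} [CommRing R] [StarRing R]
    [Fintype ι] [Fintype κ] [Fintype μ] [DecidableEq ι] [DecidableEq κ] [DecidableEq μ]
    {A : Matrix κ κ R} (hA : A ∈ unitaryGroup κ R) :
    (1 : Matrix ι ι R) ⊗ₖ (A ⊗ₖ (1 : Matrix μ μ R)) ∈ unitaryGroup (ι × κ × μ) R :=
  kronecker_mem_unitary (one_mem _) (kronecker_mem_unitary hA (one_mem _))

theorem Htil_mem_unitaryGroup : Htil h ∈ unitaryGroup (Ix h) ℂ :=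
  Htil_eq_kronecker h ▸ one_kronecker_kronecker_one_mem_unitaryGroup Hgate_mem_unitaryGroup

theorem Stil_mem_unitaryGroup : Stil h ∈ unitaryGroup (Ix h) ℂ :=
  Stil_eq_kronecker h ▸ one_kronecker_kronecker_one_mem_unitaryGroup Sgate_mem_unitaryGroup

theorem Ztil_mem_unitaryGroup : Ztil h ∈ unitaryGroup (Ix h) ℂ :=
  Ztil_eq_kronecker h ▸ one_kronecker_kronecker_one_mem_unitaryGroup Zgate_mem_unitaryGroup

theorem isHermitian_Ztil : (Ztil h).IsHermitian := by
  simp only [IsHermitian, Ztil_eq_kronecker, conjTranspose_kronecker, conjTranspose_one,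
    isHermitian_Zgate.eq]

theorem Htil_conjTranspose_mul_Ztil_mul_Htil :
    (Htil h)ᴴ * Ztil h * Htil h = 1 ⊗ₖ (Xgate ⊗ₖ 1) := by
  simp only [Htil_eq_kronecker, Ztil_eq_kronecker, conjTranspose_kronecker, conjTranspose_one,
    ← mul_kronecker_mul, Matrix.mul_one, Hgate_conjTranspose_mul_Zgate_mul_Hgate]

theorem Rop_eq_diagonal : Rop h = diagonal fun x => if x.1 = 0 ∧ x.2.1 = 0 then -1 else 1 := by
  ext ⟨j, q, l⟩ ⟨j', q', l'⟩
  simp only [Rop, of_apply, diagonal_apply, Prod.mk.injEq]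
  split_ifs <;> grind

theorem Rop_mem_unitaryGroup : Rop h ∈ unitaryGroup (Ix h) ℂ := by
  rw [Rop_eq_diagonal]
  refine diagonal_mem_unitaryGroup fun x => ?_
  split_ifs <;> simp [Unitary.mem_iff]

theorem isHermitian_Rop : (Rop h).IsHermitian := by
  rw [Rop_eq_diagonal, isHermitian_diagonal_iff]
  intro x
  split_ifs <;> simp [IsSelfAdjoint]

theorem Rop_mul_add_mul_Rop_apply (A : Matrix (Ix h) (Ix h) ℂ) (x : Ix h) (k : Fin (2 ^ h)) :
    (Rop h * A + A * Rop h) x (0, 0, k) =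
      if x.1 = 0 ∧ x.2.1 = 0 then -2 * A x (0, 0, k) else 0 := by
  rw [Rop_eq_diagonal, Matrix.add_apply, diagonal_mul, mul_diagonal]
  by_cases hx : x.1 = 0 ∧ x.2.1 = 0
  · rw [if_pos hx, if_pos hx, if_pos ⟨rfl, rfl⟩]
    ring
  · rw [if_neg hx, if_neg hx, if_pos ⟨rfl, rfl⟩]
    ring

theorem UCS_eq_kronecker_add :
    UCS h U = U ⊗ₖ (single 0 0 1 ⊗ₖ 1) + 1 ⊗ₖ (single 1 1 1 ⊗ₖ 1) := by
  ext ⟨j, q, l⟩ ⟨j', q', l'⟩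
  fin_cases q <;> fin_cases q' <;> simp [UCS, one_apply]

variable {h U} in
theorem UCS_mem_unitaryGroup (hU : U ∈ unitaryGroup (Fin (2 ^ h)) ℂ) :
    UCS h U ∈ unitaryGroup (Ix h) ℂ := by
  have hsum : (1 ⊗ₖ (single 0 0 1 ⊗ₖ 1) + 1 ⊗ₖ (single 1 1 1 ⊗ₖ 1) :
      Matrix (Ix h) (Ix h) ℂ) = 1 := by
    rw [← kronecker_add, ← add_kronecker, single_zero_add_single_one, one_kronecker_one,
      one_kronecker_one]
  have hUCS : UCS h U = (U ⊗ₖ 1) * (1 ⊗ₖ (single 0 0 1 ⊗ₖ 1)) + 1 * (1 ⊗ₖ (single 1 1 1 ⊗ₖ 1)) := by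
    rw [UCS_eq_kronecker_add, ← mul_kronecker_mul, Matrix.mul_one, Matrix.one_mul, Matrix.one_mul]
  rw [hUCS]
  exact mul_add_mul_mem_unitary
    (isStarProjection_kronecker (.one _)
      (isStarProjection_kronecker (isStarProjection_single_one 0) (.one _))) hsum
    (kronecker_mem_unitary hU (one_mem _)) (one_mem _)
    (kronecker_one_commute_one_kronecker _ _) (Commute.one_left _)

theorem UCS_mul_apply_zero (M : Matrix (Ix h) (Ix h) ℂ) (j l : Fin (2 ^ h)) (y : Ix h) :
    (UCS h U * M) (j, 0, l) y = ∑ i, U j i * M (i, 0, l) y := by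
  simp [Matrix.mul_apply, UCS, Fintype.sum_prod_type, ite_and]

theorem UCS_mul_apply_one (M : Matrix (Ix h) (Ix h) ℂ) (j l : Fin (2 ^ h)) (y : Ix h) :
    (UCS h U * M) (j, 1, l) y = M (j, 1, l) y := by
  simp [Matrix.mul_apply, UCS, Fintype.sum_prod_type, ite_and]

/-- The map of computational basis states `(j, 0, l) ↦ (j, 0, l)` and
`(j, 1, l) ↦ (j ⊕ l, 1, l)` underlying `UCopy`. -/
def copyIndex (x : Ix h) : Ix h :=
  (if x.2.1 = 1 then ⟨x.1 ^^^ x.2.2, Nat.xor_lt_two_pow x.1.2 x.2.2.2⟩ else x.1, x.2)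

theorem copyIndex_involutive : Function.Involutive (copyIndex h) := by
  rintro ⟨j, q, l⟩
  fin_cases q <;> simp [copyIndex]

theorem UCopy_eq_permMatrix : UCopy h = (copyIndex_involutive h).toPerm.permMatrix ℂ := by
  ext x y
  have hxy : (x.2.1 = y.2.1 ∧ x.2.2 = y.2.2 ∧
      (x.1 : ℕ) = if y.2.1 = 1 then (y.1 : ℕ) ^^^ (y.2.2 : ℕ) else (y.1 : ℕ)) ↔
      copyIndex h x = y := by
    obtain ⟨j, q, l⟩ := x
    obtain ⟨j', q', l'⟩ := y
    rw [(copyIndex_involutive h).eq_iff]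
    by_cases hq : q' = 1 <;> simp [copyIndex, hq, Fin.ext_iff] <;> tauto
  simp [UCopy, PEquiv.toMatrix_apply, hxy]

theorem UCopy_mem_unitaryGroup : UCopy h ∈ unitaryGroup (Ix h) ℂ :=
  UCopy_eq_permMatrix h ▸ permMatrix_mem_unitaryGroup _

theorem UCopy_mul_apply (M : Matrix (Ix h) (Ix h) ℂ) (x y : Ix h) :
    (UCopy h * M) x y = M (copyIndex h x) y := by
  rw [UCopy_eq_permMatrix, PEquiv.toMatrix_toPEquiv_mul]
  rfl

theorem Stil_pow_eq_diagonal (p : ℕ) :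
    Stil h ^ p = diagonal fun x => if x.2.1 = 0 then 1 else Complex.I ^ p := by
  have hS : Stil h = diagonal fun x => if x.2.1 = 0 then 1 else Complex.I := by
    ext ⟨j, q, l⟩ ⟨j', q', l'⟩
    fin_cases q <;> fin_cases q' <;> simp [Stil, Sgate, diagonal_apply]
  rw [hS, diagonal_pow]
  exact congrArg diagonal (funext fun x => by simp [ite_pow])

end Registers

section HadamardTest

variable {h : ℕ} {U : Matrix (Fin (2 ^ h)) (Fin (2 ^ h)) ℂ}

/-- The operator `V_p = S̃^p · U_Copy · U_C^S · H̃`, which is `W_p` before its last Hadamard gate.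
It prepares the superposition `(ψ ⊗ e₀ + i^p e_k ⊗ e₁) ⊗ e_k / √2` from `e₀ ⊗ e₀ ⊗ e_k`. -/
noncomputable def Vop (h : ℕ) (U : Matrix (Fin (2 ^ h)) (Fin (2 ^ h)) ℂ) (p : ℕ) :
    Matrix (Ix h) (Ix h) ℂ :=
  Stil h ^ p * UCopy h * UCS h U * Htil h

theorem Wop_eq_Htil_mul_Vop (p : ℕ) : Wop h U p = Htil h * Vop h U p := by
  simp only [Wop, Vop, Matrix.mul_assoc]

theorem Vop_apply_zero (p : ℕ) (j l k : Fin (2 ^ h)) :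
    Vop h U p (j, 0, l) (0, 0, k) = if l = k then (Real.sqrt 2 : ℂ)⁻¹ * U j 0 else 0 := by
  rw [Vop, Matrix.mul_assoc, Matrix.mul_assoc, Stil_pow_eq_diagonal, diagonal_mul,
    UCopy_mul_apply]
  simp [copyIndex, UCS_mul_apply_zero, Htil, Hgate, ite_and, mul_comm]

theorem Vop_apply_one (p : ℕ) (j l k : Fin (2 ^ h)) :
    Vop h U p (j, 1, l) (0, 0, k) =
      if l = k ∧ j = k then (Real.sqrt 2 : ℂ)⁻¹ * Complex.I ^ p else 0 := by
  rw [Vop, Matrix.mul_assoc, Matrix.mul_assoc, Stil_pow_eq_diagonal, diagonal_mul,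
    UCopy_mul_apply]
  have hxor (hlt : (j : ℕ) ^^^ (l : ℕ) < 2 ^ h) :
      (⟨(j : ℕ) ^^^ (l : ℕ), hlt⟩ : Fin (2 ^ h)) = 0 ↔ j = l := by
    simp [Fin.ext_iff]
  have hiff : j = l ∧ l = k ↔ l = k ∧ j = k := by
    rw [and_comm, and_congr_right_iff]
    rintro rfl
    rfl
  rw [show copyIndex h (j, 1, l) = (⟨j ^^^ l, Nat.xor_lt_two_pow j.2 l.2⟩, 1, l) from rfl,
    UCS_mul_apply_one]
  simp [Htil, Hgate, hxor, hiff, mul_comm]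

theorem conjTranspose_mul_Xgate_mul_apply (V : Matrix (Ix h) (Ix h) ℂ) (x y : Ix h) :
    (Vᴴ * (1 ⊗ₖ (Xgate ⊗ₖ 1) : Matrix (Ix h) (Ix h) ℂ) * V) x y =
      ∑ j, ∑ l, (star (V (j, 0, l) x) * V (j, 1, l) y + star (V (j, 1, l) x) * V (j, 0, l) y) := by
  have hX (j q l) : ((1 ⊗ₖ (Xgate ⊗ₖ 1) : Matrix (Ix h) (Ix h) ℂ) * V) (j, q, l) y =
      V (j, 1 - q, l) y := by
    fin_cases q <;>
      simp [Matrix.mul_apply, kroneckerMap_apply, one_apply, Xgate, Fintype.sum_prod_type]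
  simp only [Matrix.mul_assoc, Matrix.mul_apply (M := Vᴴ), hX, conjTranspose_apply,
    Fintype.sum_prod_type, Fin.sum_univ_two, Finset.sum_add_distrib]
  rfl

theorem Wop_conjTranspose_mul_Ztil_mul_Wop_apply (p : ℕ) (l k : Fin (2 ^ h)) :
    ((Wop h U p)ᴴ * Ztil h * Wop h U p) (0, 0, l) (0, 0, k) =
      if l = k then ((((-Complex.I) ^ p * U k 0).re : ℝ) : ℂ) else 0 := by
  have hX : (Wop h U p)ᴴ * Ztil h * Wop h U p =
      (Vop h U p)ᴴ * (1 ⊗ₖ (Xgate ⊗ₖ 1) : Matrix (Ix h) (Ix h) ℂ) * Vop h U p := by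
    simp only [Wop_eq_Htil_mul_Vop, conjTranspose_mul, ← Htil_conjTranspose_mul_Ztil_mul_Htil,
      Matrix.mul_assoc]
  have hI : (-Complex.I) ^ p = star (Complex.I ^ p) := by
    rw [star_pow, Complex.star_def, Complex.conj_I]
  rw [hX, conjTranspose_mul_Xgate_mul_apply, hI, ← star_mul_add_star_mul_inv_sqrt_two]
  simp only [Vop_apply_zero, Vop_apply_one, Finset.sum_add_distrib, apply_ite star, star_zero,
    ite_and, ite_mul, mul_ite, zero_mul, mul_zero, Finset.sum_ite_eq', Finset.mem_univ, if_true]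
  rcases eq_or_ne l k with rfl | hlk
  · simp only [if_true, Finset.sum_ite_eq', Finset.mem_univ]
  · simp only [if_neg hlk, if_neg hlk.symm, Finset.sum_const_zero, add_zero]

end HadamardTest

section BlockEncoding

variable {h : ℕ} {U : Matrix (Fin (2 ^ h)) (Fin (2 ^ h)) ℂ}

theorem qTens_eq_kronecker (A : Matrix (Fin 2) (Fin 2) ℂ) (B : Matrix (Ix h) (Ix h) ℂ) :
    qTens h A B = A ⊗ₖ B :=
  rfl

theorem ctrlChoice_eq_kronecker_add (A B : Matrix (Ix h) (Ix h) ℂ) :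
    ctrlChoice h A B = single 0 0 1 ⊗ₖ A + single 1 1 1 ⊗ₖ B := by
  ext ⟨a, x⟩ ⟨b, y⟩
  fin_cases a <;> fin_cases b <;> simp [ctrlChoice]

theorem ctrlChoice_mem_unitaryGroup {A B : Matrix (Ix h) (Ix h) ℂ}
    (hA : A ∈ unitaryGroup (Ix h) ℂ) (hB : B ∈ unitaryGroup (Ix h) ℂ) :
    ctrlChoice h A B ∈ unitaryGroup (Fin 2 × Ix h) ℂ := by
  have hsum : (single 0 0 1 ⊗ₖ 1 + single 1 1 1 ⊗ₖ 1 : Matrix (Fin 2 × Ix h) (Fin 2 × Ix h) ℂ) =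
      1 := by
    rw [← add_kronecker, single_zero_add_single_one, one_kronecker_one]
  have hctrl : ctrlChoice h A B =
      (1 ⊗ₖ A) * (single 0 0 1 ⊗ₖ 1) + (1 ⊗ₖ B) * (single 1 1 1 ⊗ₖ 1) := by
    simp only [ctrlChoice_eq_kronecker_add, ← mul_kronecker_mul, Matrix.mul_one, Matrix.one_mul]
  rw [hctrl]
  exact mul_add_mul_mem_unitary
    (isStarProjection_kronecker (isStarProjection_single_one 0) (.one _)) hsum
    (kronecker_mem_unitary (one_mem _) hA) (kronecker_mem_unitary (one_mem _) hB)
    (kronecker_one_commute_one_kronecker _ _).symm (kronecker_one_commute_one_kronecker _ _).symm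

theorem Wop_mem_unitaryGroup (hU : U ∈ unitaryGroup (Fin (2 ^ h)) ℂ) (p : ℕ) :
    Wop h U p ∈ unitaryGroup (Ix h) ℂ :=
  mul_mem (mul_mem (mul_mem (mul_mem (Htil_mem_unitaryGroup h)
    (pow_mem (Stil_mem_unitaryGroup h) p)) (UCopy_mem_unitaryGroup h))
    (UCS_mem_unitaryGroup hU)) (Htil_mem_unitaryGroup h)

theorem Gop_mem_unitaryGroup (hU : U ∈ unitaryGroup (Fin (2 ^ h)) ℂ) (p : ℕ) :
    Gop h U p ∈ unitaryGroup (Ix h) ℂ :=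
  have hW := Wop_mem_unitaryGroup hU p
  mul_mem (mul_mem (mul_mem hW (Rop_mem_unitaryGroup h)) (Unitary.star_mem hW))
    (Ztil_mem_unitaryGroup h)

theorem USp_mem_unitaryGroup (hU : U ∈ unitaryGroup (Fin (2 ^ h)) ℂ) (p : ℕ) :
    USp h U p ∈ unitaryGroup (Fin 2 × Ix h) ℂ :=
  have hW := Wop_mem_unitaryGroup hU p
  have hG := Gop_mem_unitaryGroup hU p
  have hXZX := mul_mem (mul_mem Xgate_mem_unitaryGroup Zgate_mem_unitaryGroup)
    Xgate_mem_unitaryGroup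
  mul_mem (mul_mem (mul_mem (kronecker_mem_unitary hXZX (one_mem _))
    (kronecker_mem_unitary Hgate_mem_unitaryGroup (Unitary.star_mem hW)))
    (ctrlChoice_mem_unitaryGroup hG (Unitary.star_mem hG)))
    (kronecker_mem_unitary Hgate_mem_unitaryGroup hW)

theorem qTens_mul_ctrlChoice_mul_qTens_apply_zero_zero (A B C D : Matrix (Ix h) (Ix h) ℂ)
    (x y : Ix h) :
    (qTens h (Xgate * Zgate * Xgate) 1 * qTens h Hgate A * ctrlChoice h B C *
      qTens h Hgate D) (0, x) (0, y) = -(1 / 2) * (A * (B + C) * D) x y := by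
  simp only [ctrlChoice_eq_kronecker_add, qTens_eq_kronecker, Matrix.add_mul, mul_add,
    ← mul_kronecker_mul, Matrix.one_mul, Matrix.add_apply, kroneckerMap_apply,
    XZX_mul_Hgate_mul_single_mul_Hgate_apply_zero_zero]

theorem USp_apply_zero_zero (hU : U ∈ unitaryGroup (Fin (2 ^ h)) ℂ) (p : ℕ) (x y : Ix h) :
    USp h U p (0, x) (0, y) =
      -(1 / 2) * (Rop h * ((Wop h U p)ᴴ * Ztil h * Wop h U p) +
        (Wop h U p)ᴴ * Ztil h * Wop h U p * Rop h) x y := by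
  rw [USp, qTens_mul_ctrlChoice_mul_qTens_apply_zero_zero]
  exact congrArg (fun M : Matrix (Ix h) (Ix h) ℂ => -(1 / 2) * M x y)
    (star_mul_reflection_add_star_mul (Wop_mem_unitaryGroup hU p) (isHermitian_Rop h)
      (isHermitian_Ztil h))

theorem USp_apply_zero_basis (hU : U ∈ unitaryGroup (Fin (2 ^ h)) ℂ) (p : ℕ) (k : Fin (2 ^ h))
    (z : Ix h) :
    USp h U p (0, z) (0, (0, 0, k)) = (((-Complex.I) ^ p * U k 0).re : ℂ) * eVec h k z := by
  obtain ⟨j, q, l⟩ := z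
  rw [USp_apply_zero_zero hU, Rop_mul_add_mul_Rop_apply]
  by_cases hjq : j = 0 ∧ q = 0
  · obtain ⟨rfl, rfl⟩ := hjq
    simp [Wop_conjTranspose_mul_Ztil_mul_Wop_apply, eVec]
  · have hne : (j, q, l) ≠ (0, 0, k) := by simp_all
    simp [hjq, hne, eVec]

theorem USp_unitary_and_block_general (h : ℕ) {U : Matrix (Fin (2 ^ h)) (Fin (2 ^ h)) ℂ}
    (hU : U ∈ unitaryGroup (Fin (2 ^ h)) ℂ) (p : ℕ) :
    USp h U p ∈ unitaryGroup (Fin 2 × Ix h) ℂ ∧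
    ∀ k : Fin (2 ^ h), ∀ z : Ix h,
      (USp h U p).mulVec (fun x => if x = (0, (0, 0, k)) then 1 else 0) (0, z) =
        ((((-Complex.I) ^ p * U k 0).re : ℂ)) * eVec h k z := by
  refine ⟨USp_mem_unitaryGroup hU p, fun k z => ?_⟩
  rw [← USp_apply_zero_basis hU]
  simp [mulVec, dotProduct]

end BlockEncoding

/-- block-encoding of `Re((−i)^p ψ_k)`. The operator
`U^{(S)}_{(p)}` is unitary, and the component of `U^{(S)}_{(p)}(e₀ ⊗ e₀ ⊗ e₀ ⊗ e_k)`
on the first qubit being `|0⟩` is exactly `Re((−i)^p ψ_k) · (e₀ ⊗ e₀ ⊗ e_k)`;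
in particular the `h+1` middle registers return to the state `e₀ ⊗ e₀`. -/
theorem USp_unitary_and_block (h : ℕ) (hh : 1 ≤ h)
    (U : Matrix (Fin (2 ^ h)) (Fin (2 ^ h)) ℂ)
    (hU₁ : U * Uᴴ = 1) (hU₂ : Uᴴ * U = 1) (p : ℕ) (hp : p ≤ 1) :
    (USp h U p * (USp h U p)ᴴ = 1 ∧ (USp h U p)ᴴ * USp h U p = 1) ∧
    ∀ k : Fin (2 ^ h), ∀ z : Ix h,
      (USp h U p).mulVec (fun x => if x = (0, (0, 0, k)) then 1 else 0) (0, z) =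
        ((((-Complex.I) ^ p * U k 0).re : ℂ)) * eVec h k z := by
  have hgen := USp_unitary_and_block_general h (mem_unitaryGroup_iff.2 hU₁) p
  exact ⟨⟨mem_unitaryGroup_iff.1 hgen.1, mem_unitaryGroup_iff'.1 hgen.1⟩, hgen.2⟩

end DiagBlockEncoding
end

section
/- Let q ≥ 1 and let P be a real polynomial with deg P ≤ q, parity q mod 2 (i.e. P(−x) = (−1)^q P(x) for all x), and |P(x)| ≤ 1 for all x ∈ [−1, 1]. Then there exist real phases φ₀, φ₁, …, φ_q such that for every x ∈ [−1, 1]: P(x) = Re( (e^{iφ₀Z} · ∏_{j=1}^{q} (W(x) · e^{iφ_jZ}))₍₀,₀₎ ), where the subscript (0,0) denotes the top-left entry of the 2×2 matrix product. -/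
namespace QSP

/-- The signal matrix `W(x) = [[x, i√(1−x²)], [i√(1−x²), x]]`. -/
noncomputable def Wmat (x : ℝ) : Matrix (Fin 2) (Fin 2) ℂ :=
  !![(x : ℂ), Complex.I * Real.sqrt (1 - x ^ 2);
     Complex.I * Real.sqrt (1 - x ^ 2), (x : ℂ)]

/-- The phase matrix `e^{iφZ} = diag(e^{iφ}, e^{−iφ})`. -/
noncomputable def ePhiZ (φ : ℝ) : Matrix (Fin 2) (Fin 2) ℂ :=
  !![Complex.exp (Complex.I * φ), 0; 0, Complex.exp (-(Complex.I * φ))]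

/-- The quantum signal processing product
`e^{iφ₀Z} · ∏_{j=1}^{q} (W(x) · e^{iφ_jZ})` (ordered left to right by
increasing `j`). -/
noncomputable def qspProd (q : ℕ) (φ : ℕ → ℝ) (x : ℝ) :
    Matrix (Fin 2) (Fin 2) ℂ :=
  ePhiZ (φ 0) * ((List.range q).map fun j => Wmat x * ePhiZ (φ (j + 1))).prod

/-!
Row `0` of a QSP product on `[-1, 1]` is `(A(x), i√(1 - x²) B(x))` for polynomials `A`, `B` with
`|A|² + (1 - x²)|B|² = 1`. Conversely such a pair is a QSP row: unitarity forces the leading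
coefficients of `A` and `B` to have equal modulus, so for a suitable phase `θ` multiplying the row
on the right by `(W(x) e^{iθZ})⁻¹` cancels them and lowers the degree by one.

To realize `P` as `Re A`, take `A = P + i c` and `B = d` with `c`, `d` real, so that what is needed
is `1 - P² = c² + (1 - x²) d²`. The right-hand sides form a multiplicative set, being the norms
`|c + i√(1 - x²) d|²`. Since `1 - P²` is even, it is `U(x²)` with `U ≥ 0` on `[0, 1]`, and `U`
splits into factors of degree at most two that are nonnegative on `[0, 1]`, each of them a norm.
-/

open Polynomial ComplexConjugate

section ParityDegree

/-- The polynomials of degree at most `n` all of whose exponents are congruent to `n` modulo `2`,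
that is, the span of `X ^ n, X ^ (n - 2), …`. -/
def parityDegreeLE (R : Type*) [Semiring R] (n : ℕ) : Submodule R R[X] where
  carrier := {p | ∀ k, p.coeff k ≠ 0 → k ≤ n ∧ k % 2 = n % 2}
  zero_mem' := by simp
  add_mem' {p r} hp hr k hk := by
    by_cases hpk : p.coeff k = 0
    · exact hr k fun hrk => hk (by simp [hpk, hrk])
    · exact hp k hpk
  smul_mem' a p hp k hk := hp k fun hpk => hk (by simp [hpk])

variable {R : Type*}

section Semiring

variable [Semiring R] {m n : ℕ} {p r : R[X]}

lemma C_mem_parityDegreeLE (a : R) : C a ∈ parityDegreeLE R 0 := by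
  intro k hk
  obtain rfl : k = 0 := by
    by_contra h
    exact hk (coeff_C_of_ne_zero h)
  simp

lemma X_mem_parityDegreeLE : X ∈ parityDegreeLE R 1 := by
  intro k hk
  obtain rfl : k = 1 := by
    by_contra h
    exact hk (coeff_X_of_ne_one h)
  simp

lemma parityDegreeLE_mono (hmn : m ≤ n) (hmod : m % 2 = n % 2) :
    parityDegreeLE R m ≤ parityDegreeLE R n := by
  intro p hp k hk
  have := hp k hk
  omega

lemma one_mem_parityDegreeLE_two_mul (n : ℕ) : 1 ∈ parityDegreeLE R (2 * n) :=
  parityDegreeLE_mono (by omega) (by omega) (C_mem_parityDegreeLE 1)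

lemma mul_mem_parityDegreeLE (hp : p ∈ parityDegreeLE R m) (hr : r ∈ parityDegreeLE R n) :
    p * r ∈ parityDegreeLE R (m + n) := by
  intro k hk
  rw [coeff_mul] at hk
  obtain ⟨⟨i, j⟩, hij, hne⟩ := Finset.exists_ne_zero_of_sum_ne_zero hk
  have hsum : i + j = k := by simpa using hij
  have hi := hp i (left_ne_zero_of_mul hne)
  have hj := hr j (right_ne_zero_of_mul hne)
  omega

lemma C_mul_mem_parityDegreeLE (a : R) (hp : p ∈ parityDegreeLE R n) :
    C a * p ∈ parityDegreeLE R n := by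
  simpa using mul_mem_parityDegreeLE (C_mem_parityDegreeLE a) hp

lemma X_mul_mem_parityDegreeLE_succ_iff :
    X * p ∈ parityDegreeLE R (n + 1) ↔ p ∈ parityDegreeLE R n := by
  refine ⟨fun hp k hk => ?_, fun hp => ?_⟩
  · have := hp (k + 1) (by rwa [coeff_X_mul])
    omega
  · simpa [add_comm] using mul_mem_parityDegreeLE X_mem_parityDegreeLE hp

lemma mem_parityDegreeLE_of_X_sq_mul_mem (hp : X ^ 2 * p ∈ parityDegreeLE R n) :
    p ∈ parityDegreeLE R n := by
  have hp' := parityDegreeLE_mono (Nat.le_add_right n 2) (by omega) hp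
  rwa [pow_two, mul_assoc, X_mul_mem_parityDegreeLE_succ_iff,
    X_mul_mem_parityDegreeLE_succ_iff] at hp'

lemma mem_parityDegreeLE_of_coeff_eq_zero (hp : p ∈ parityDegreeLE R (n + 2))
    (hcoeff : p.coeff (n + 2) = 0) : p ∈ parityDegreeLE R n := by
  intro k hk
  have := hp k hk
  have : k ≠ n + 2 := fun h => hk (h ▸ hcoeff)
  omega

lemma eq_zero_of_X_mul_mem_parityDegreeLE_zero (hp : X * p ∈ parityDegreeLE R 0) : p = 0 := by
  ext k
  by_contra hk
  have := hp (k + 1) (by rwa [coeff_X_mul])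
  omega

lemma natDegree_le_of_mem_parityDegreeLE (hp : p ∈ parityDegreeLE R n) : p.natDegree ≤ n :=
  natDegree_le_iff_coeff_eq_zero.2 fun k hk => by
    by_contra hne
    exact hk.not_ge (hp k hne).1

lemma map_mem_parityDegreeLE {S : Type*} [Semiring S] (f : R →+* S)
    (hp : p ∈ parityDegreeLE R n) : p.map f ∈ parityDegreeLE S n :=
  fun k hk => hp k fun h => hk (by simp [h])

end Semiring

lemma exists_expand_two_eq_of_mem_parityDegreeLE [CommSemiring R] {n : ℕ} {p : R[X]}
    (hp : p ∈ parityDegreeLE R (2 * n)) : ∃ U : R[X], U.natDegree ≤ n ∧ expand R 2 U = p := by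
  refine ⟨contract 2 p, natDegree_le_iff_coeff_eq_zero.2 fun k hk => ?_, ?_⟩
  · rw [coeff_contract two_ne_zero]
    by_contra hne
    have := hp _ hne
    omega
  · ext k
    rw [coeff_expand two_pos, coeff_contract two_ne_zero]
    split_ifs with hk
    · rw [Nat.div_mul_cancel hk]
    · by_contra hne
      have := hp k (Ne.symm hne)
      omega

lemma mem_parityDegreeLE_of_eval_neg [CommRing R] [IsDomain R] [CharZero R] {n : ℕ} {p : R[X]}
    (hdeg : p.natDegree ≤ n) (hpar : ∀ x, p.eval (-x) = (-1) ^ n * p.eval x) :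
    p ∈ parityDegreeLE R n := by
  have : Infinite R := CharZero.infinite R
  have hcomp : p.comp (C (-1) * X) = C ((-1) ^ n) * p :=
    Polynomial.funext fun x => by simp [hpar x]
  intro k hk
  refine ⟨(le_natDegree_of_ne_zero hk).trans hdeg, ?_⟩
  have hsign : (-1 : R) ^ k = (-1) ^ n := by
    have hcoeff := congrArg (coeff · k) hcomp
    simp only [comp_C_mul_X_coeff, coeff_C_mul] at hcoeff
    exact mul_left_cancel₀ hk (by rw [hcoeff, mul_comm])
  rcases Nat.even_or_odd k with hk | hk <;> rcases Nat.even_or_odd n with hn | hn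
  · rw [Nat.even_iff.1 hk, Nat.even_iff.1 hn]
  · norm_num [hk.neg_one_pow, hn.neg_one_pow] at hsign
  · norm_num [hk.neg_one_pow, hn.neg_one_pow] at hsign
  · rw [Nat.odd_iff.1 hk, Nat.odd_iff.1 hn]

end ParityDegree

section CircleNorm

/-- `p` has the form `c ^ 2 + (1 - X ^ 2) * d ^ 2`, where `c` and `X * d` have degree at most `n`
and the parity of `n`. At `x = cos θ` the form is the squared modulus of `c + i sin θ d`. The
condition is put on `X * d`, rather than on `d` with `n - 1`, so that `n = 0` forces `d = 0`. -/
def IsCircleNorm {R : Type*} [CommRing R] (n : ℕ) (p : R[X]) : Prop :=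
  ∃ c d : R[X], c ∈ parityDegreeLE R n ∧ X * d ∈ parityDegreeLE R n ∧
    p = c ^ 2 + (1 - X ^ 2) * d ^ 2

variable {R : Type*} [CommRing R] {m n : ℕ} {p r : R[X]}

lemma IsCircleNorm.mul (hp : IsCircleNorm m p) (hr : IsCircleNorm n r) :
    IsCircleNorm (m + n) (p * r) := by
  obtain ⟨c, d, hc, hd, rfl⟩ := hp
  obtain ⟨c', d', hc', hd', rfl⟩ := hr
  refine ⟨c * c' + (X * d) * (X * d') - d * d', c * d' + d * c', ?_, ?_, by ring⟩
  · have hdd := mul_mem_parityDegreeLE hd hd'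
    refine sub_mem (add_mem (mul_mem_parityDegreeLE hc hc') hdd)
      (mem_parityDegreeLE_of_X_sq_mul_mem ?_)
    rwa [show X ^ 2 * (d * d') = (X * d) * (X * d') by ring]
  · rw [show X * (c * d' + d * c') = c * (X * d') + (X * d) * c' by ring]
    exact add_mem (mul_mem_parityDegreeLE hc hd') (mul_mem_parityDegreeLE hd hc')

lemma isCircleNorm_one_one : IsCircleNorm 1 (1 : R[X]) :=
  ⟨X, 1, X_mem_parityDegreeLE, by simpa using X_mem_parityDegreeLE, by ring⟩

lemma IsCircleNorm.mono (hmn : m ≤ n) (hp : IsCircleNorm m p) : IsCircleNorm n p := by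
  induction n, hmn using Nat.le_induction with
  | base => exact hp
  | succ k _ ih => simpa using ih.mul isCircleNorm_one_one

end CircleNorm

section MarkovLukacs

lemma isCircleNorm_C {a : ℝ} (ha : 0 ≤ a) : IsCircleNorm 0 (C a) := by
  refine ⟨C √a, 0, C_mem_parityDegreeLE _, by simp, ?_⟩
  rw [← C_pow, Real.sq_sqrt ha]
  ring

lemma isCircleNorm_expand_of_natDegree_le_one {U : ℝ[X]} (hdeg : U.natDegree ≤ 1)
    (h0 : 0 ≤ U.eval 0) (h1 : 0 ≤ U.eval 1) : IsCircleNorm 1 (expand ℝ 2 U) := by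
  obtain ⟨a, b, rfl⟩ := exists_eq_X_add_C_of_natDegree_le_one hdeg
  have hb : (C √b) ^ 2 = C b := by rw [← C_pow, Real.sq_sqrt (by simpa using h0)]
  have hab : (C √(a + b)) ^ 2 = C a + C b := by
    rw [← C_pow, Real.sq_sqrt (by simpa using h1), C_add]
  refine ⟨C √(a + b) * X, C √b, C_mul_mem_parityDegreeLE _ X_mem_parityDegreeLE, ?_, ?_⟩
  · rw [X_mul_C]
    exact C_mul_mem_parityDegreeLE _ X_mem_parityDegreeLE
  · simp only [map_add, map_mul, expand_C, expand_X]
    linear_combination -X ^ 2 * hab - (1 - X ^ 2) * hb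

lemma nonneg_of_forall_nonneg_sq_add {K : Type*} [Field K] [LinearOrder K] [IsStrictOrderedRing K]
    {s t d : K} (hs : 0 ≤ s) (ht : 0 ≤ t)
    (h : ∀ y ∈ Set.Icc (0 : K) 1, 0 ≤ (s * (1 - y) - t * y) ^ 2 + d * y * (1 - y)) : 0 ≤ d := by
  by_contra! hd
  -- The square vanishes at `s / (s + t)`; adding `ε` to `s` and `t` puts this point in `(0, 1)`.
  obtain ⟨ε, hε, hεd⟩ : ∃ ε : K, 0 < ε ∧ ε * (s + t) ≤ -d := by
    refine ⟨-d / (s + t + 1), div_pos (neg_pos.2 hd) (by positivity), ?_⟩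
    rw [div_mul_eq_mul_div, div_le_iff₀ (by positivity)]
    nlinarith
  have hpos : 0 < s + t + 2 * ε := by positivity
  have hy : 0 ≤ ε ^ 2 * (s - t) ^ 2 + d * ((s + ε) * (t + ε)) := by
    have hmem : (s + ε) / (s + t + 2 * ε) ∈ Set.Icc (0 : K) 1 :=
      ⟨by positivity, by rw [div_le_one hpos]; linarith⟩
    have hscale : ε ^ 2 * (s - t) ^ 2 + d * ((s + ε) * (t + ε)) =
        ((s * (1 - (s + ε) / (s + t + 2 * ε)) - t * ((s + ε) / (s + t + 2 * ε))) ^ 2 +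
          d * ((s + ε) / (s + t + 2 * ε)) * (1 - (s + ε) / (s + t + 2 * ε))) *
          (s + t + 2 * ε) ^ 2 := by
      field_simp
      ring
    rw [hscale]
    exact mul_nonneg (h _ hmem) (sq_nonneg _)
  have hsq : ε * (s - t) ^ 2 ≤ -d * (s + t) := by
    nlinarith [mul_nonneg hs ht, mul_le_mul_of_nonneg_right hεd (add_nonneg hs ht),
      mul_nonneg hε.le (mul_nonneg hs ht)]
  have hprod : ε * (s + t + ε) ≤ (s + ε) * (t + ε) := by nlinarith [mul_nonneg hs ht]
  nlinarith [mul_le_mul_of_nonneg_left hsq hε.le, mul_le_mul_of_nonpos_left hprod hd.le,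
    mul_pos (mul_pos hε hε) (neg_pos.2 hd)]

lemma exists_eq_sq_add_of_natDegree_le_two {U : ℝ[X]} (hdeg : U.natDegree ≤ 2)
    (hU : ∀ y ∈ Set.Icc (0 : ℝ) 1, 0 ≤ U.eval y) :
    ∃ s t d : ℝ, 0 ≤ d ∧ U = (C s * (1 - X) - C t * X) ^ 2 + C d * X * (1 - X) := by
  obtain ⟨a, b, c, rfl⟩ : ∃ a b c : ℝ, U = C a * X ^ 2 + C b * X + C c :=
    ⟨_, _, _, eq_quadratic_of_degree_le_two (natDegree_le_iff_degree_le.1 hdeg)⟩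
  have hs : √c ^ 2 = c := Real.sq_sqrt (by simpa using hU 0 (by simp))
  have ht : √(a + b + c) ^ 2 = a + b + c := Real.sq_sqrt (by simpa using hU 1 (by simp))
  have hform : C a * X ^ 2 + C b * X + C c = (C √c * (1 - X) - C √(a + b + c) * X) ^ 2 +
      C (b + 2 * c + 2 * √c * √(a + b + c)) * X * (1 - X) := by
    refine Polynomial.funext fun y => ?_
    simp only [eval_add, eval_sub, eval_mul, eval_pow, eval_C, eval_X, eval_one]
    linear_combination -(1 - y) ^ 2 * hs - y ^ 2 * ht
  refine ⟨_, _, _, nonneg_of_forall_nonneg_sq_add (Real.sqrt_nonneg c)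
    (Real.sqrt_nonneg (a + b + c)) fun y hy => ?_, hform⟩
  simpa [hform] using hU y hy

lemma isCircleNorm_expand_of_natDegree_le_two {U : ℝ[X]} (hdeg : U.natDegree ≤ 2)
    (hU : ∀ y ∈ Set.Icc (0 : ℝ) 1, 0 ≤ U.eval y) : IsCircleNorm 2 (expand ℝ 2 U) := by
  obtain ⟨s, t, d, hd, rfl⟩ := exists_eq_sq_add_of_natDegree_le_two hdeg hU
  have hX : X ^ 2 ∈ parityDegreeLE ℝ 2 := by
    simpa [pow_two] using mul_mem_parityDegreeLE X_mem_parityDegreeLE X_mem_parityDegreeLE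
  have hone : 1 ∈ parityDegreeLE ℝ 2 := one_mem_parityDegreeLE_two_mul 1
  refine ⟨C s * (1 - X ^ 2) - C t * X ^ 2, C √d * X, ?_, ?_, ?_⟩
  · exact sub_mem (C_mul_mem_parityDegreeLE s (sub_mem hone hX)) (C_mul_mem_parityDegreeLE t hX)
  · rw [show X * (C √d * X) = C √d * X ^ 2 by ring]
    exact C_mul_mem_parityDegreeLE _ hX
  · have hsqrt : (C √d) ^ 2 = C d := by rw [← C_pow, Real.sq_sqrt hd]
    simp only [map_add, map_mul, map_sub, map_pow, map_one, expand_C, expand_X]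
    linear_combination -(1 - X ^ 2) * X ^ 2 * hsqrt

lemma eval_nonneg_of_eval_mul_nonneg {s : Set ℝ} (hs : s ⊆ closure (interior s)) {Q V : ℝ[X]}
    (hQ0 : Q ≠ 0) (hQ : ∀ y ∈ s, 0 ≤ Q.eval y) (hQV : ∀ y ∈ s, 0 ≤ (Q * V).eval y) :
    ∀ y ∈ s, 0 ≤ V.eval y := by
  have hdense : Dense {y | Q.eval y ≠ 0} :=
    ((finite_setOfPred_isRoot hQ0).countable.dense_compl ℝ)
  have hclosed : IsClosed {y | 0 ≤ V.eval y} := isClosed_le continuous_const V.continuous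
  have hsub : interior s ∩ {y | Q.eval y ≠ 0} ⊆ {y | 0 ≤ V.eval y} := fun y hy => by
    have hys := interior_subset hy.1
    exact nonneg_of_mul_nonneg_right (by simpa using hQV y hys) ((hQ y hys).lt_of_ne' hy.2)
  calc s ⊆ closure (interior s) := hs
    _ ⊆ closure (interior s ∩ {y | Q.eval y ≠ 0}) :=
      closure_minimal (hdense.open_subset_closure_inter isOpen_interior) isClosed_closure
    _ ⊆ {y | 0 ≤ V.eval y} := closure_minimal hsub hclosed

lemma X_sub_C_sq_dvd_of_isLocalMin {U : ℝ[X]} {a : ℝ} (ha : U.IsRoot a)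
    (hmin : IsLocalMin (fun y => U.eval y) a) : (X - C a) ^ 2 ∣ U := by
  rcases eq_or_ne U 0 with rfl | hU
  · exact dvd_zero _
  have hderiv : (derivative U).IsRoot a := by
    rw [IsRoot, ← Polynomial.deriv]
    exact hmin.deriv_eq_zero
  exact (le_rootMultiplicity_iff hU).1 ((one_lt_rootMultiplicity_iff_isRoot hU).2 ⟨ha, hderiv⟩)

lemma exists_dvd_natDegree_eq_one_or_two_of_isRoot {a b r : ℝ} {U : ℝ[X]}
    (hU : ∀ y ∈ Set.Icc a b, 0 ≤ U.eval y) (hr : U.IsRoot r) :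
    ∃ Q, Q ∣ U ∧ (Q.natDegree = 1 ∨ Q.natDegree = 2) ∧ ∀ y ∈ Set.Icc a b, 0 ≤ Q.eval y := by
  have hdvd : X - C r ∣ U := dvd_iff_isRoot.2 hr
  rcases le_or_gt r a with hra | har
  · exact ⟨X - C r, hdvd, .inl (natDegree_X_sub_C r), fun y hy => by simpa using hra.trans hy.1⟩
  rcases le_or_gt b r with hbr | hrb
  · exact ⟨-(X - C r), neg_dvd.2 hdvd, .inl (by rw [natDegree_neg, natDegree_X_sub_C]),
      fun y hy => by simpa using hy.2.trans hbr⟩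
  have hmin : IsLocalMin (fun y => U.eval y) r := by
    filter_upwards [Icc_mem_nhds har hrb] with y hy
    simpa [hr.eq_zero] using hU y hy
  exact ⟨(X - C r) ^ 2, X_sub_C_sq_dvd_of_isLocalMin hr hmin, .inr (by simp),
    fun y _ => by simpa using sq_nonneg (y - r)⟩

lemma exists_dvd_natDegree_eq_one_or_two_of_nonneg {a b : ℝ} {U : ℝ[X]}
    (hU : ∀ y ∈ Set.Icc a b, 0 ≤ U.eval y) (hdeg : U.natDegree ≠ 0) :
    ∃ Q, Q ∣ U ∧ (Q.natDegree = 1 ∨ Q.natDegree = 2) ∧ ∀ y ∈ Set.Icc a b, 0 ≤ Q.eval y := by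
  obtain ⟨z, hz⟩ := IsAlgClosed.exists_aeval_eq_zero ℂ U
    fun h => hdeg (natDegree_eq_of_degree_eq_some h)
  by_cases him : z.im = 0
  · obtain ⟨r, rfl⟩ : ∃ r : ℝ, (r : ℂ) = z := ⟨z.re, Complex.ext rfl him.symm⟩
    refine exists_dvd_natDegree_eq_one_or_two_of_isRoot hU (r := r) ?_
    simpa using (aeval_algebraMap_eq_zero_iff ℂ r U).1 hz
  · refine ⟨_, quadratic_dvd_of_aeval_eq_zero_im_ne_zero U hz him, .inr (by compute_degree!),
      fun y _ => ?_⟩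
    simp only [eval_add, eval_sub, eval_mul, eval_pow, eval_C, eval_X]
    rw [← Complex.normSq_eq_norm_sq, Complex.normSq_apply]
    nlinarith [sq_nonneg (y - z.re), sq_nonneg z.im]

theorem isCircleNorm_expand_of_nonneg {U : ℝ[X]}
    (hU : ∀ y ∈ Set.Icc (0 : ℝ) 1, 0 ≤ U.eval y) : IsCircleNorm U.natDegree (expand ℝ 2 U) := by
  induction hn : U.natDegree using Nat.strong_induction_on generalizing U with
  | _ n ih =>
  subst hn
  by_cases hdeg : U.natDegree = 0
  · obtain ⟨a, rfl⟩ := natDegree_eq_zero.1 hdeg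
    simpa using isCircleNorm_C (by simpa using hU 0 (by simp))
  obtain ⟨Q, ⟨V, rfl⟩, hQdeg, hQ⟩ := exists_dvd_natDegree_eq_one_or_two_of_nonneg hU hdeg
  have hQV : Q * V ≠ 0 := fun h => hdeg (by simp [h])
  have hQ0 : Q ≠ 0 := left_ne_zero_of_mul hQV
  have hdegmul := natDegree_mul hQ0 (right_ne_zero_of_mul hQV)
  have hV : ∀ y ∈ Set.Icc (0 : ℝ) 1, 0 ≤ V.eval y :=
    eval_nonneg_of_eval_mul_nonneg (by simp) hQ0 hQ hU
  have hQnorm : IsCircleNorm Q.natDegree (expand ℝ 2 Q) := by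
    rcases hQdeg with h | h <;> rw [h]
    · exact isCircleNorm_expand_of_natDegree_le_one h.le (hQ 0 (by simp)) (hQ 1 (by simp))
    · exact isCircleNorm_expand_of_natDegree_le_two h.le hQ
  rw [hdegmul, map_mul]
  exact hQnorm.mul (ih _ (by omega) hV rfl)

theorem isCircleNorm_of_nonneg {n : ℕ} {p : ℝ[X]} (hp : p ∈ parityDegreeLE ℝ (2 * n))
    (hnonneg : ∀ x ∈ Set.Icc (-1 : ℝ) 1, 0 ≤ p.eval x) : IsCircleNorm n p := by
  obtain ⟨U, hdeg, rfl⟩ := exists_expand_two_eq_of_mem_parityDegreeLE hp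
  refine (isCircleNorm_expand_of_nonneg fun y hy => ?_).mono hdeg
  have hsqrt : √y ∈ Set.Icc (-1 : ℝ) 1 :=
    ⟨by linarith [Real.sqrt_nonneg y], Real.sqrt_le_one.2 hy.2⟩
  simpa [expand_eval, Real.sq_sqrt hy.1] using hnonneg _ hsqrt

end MarkovLukacs

section PhaseFactors

lemma qspProd_succ (n : ℕ) (φ : ℕ → ℝ) (x : ℝ) :
    qspProd (n + 1) φ x = qspProd n φ x * (Wmat x * ePhiZ (φ (n + 1))) := by
  simp [qspProd, List.range_succ, mul_assoc]

lemma qspProd_congr {n : ℕ} {φ ψ : ℕ → ℝ} (h : ∀ j ≤ n, φ j = ψ j) (x : ℝ) :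
    qspProd n φ x = qspProd n ψ x := by
  have hmap : ((List.range n).map fun j => Wmat x * ePhiZ (φ (j + 1))) =
      (List.range n).map fun j => Wmat x * ePhiZ (ψ (j + 1)) :=
    List.map_congr_left fun j hj => by rw [h _ (List.mem_range.1 hj)]
  rw [qspProd, qspProd, hmap, h 0 n.zero_le]

/-- Pairs of polynomials eligible as the first row `(A, i√(1 - x²) B)` of a QSP product with `n`
signal matrices: degree and parity are right, and the row has norm `1` for `x ∈ [-1, 1]`. -/
structure IsQSPPair (n : ℕ) (A B : ℂ[X]) : Prop where
  left_mem : A ∈ parityDegreeLE ℂ n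
  X_mul_right_mem : X * B ∈ parityDegreeLE ℂ n
  unitary : A * A.map (starRingEnd ℂ) + (1 - X ^ 2) * (B * B.map (starRingEnd ℂ)) = 1

/-- The phases `φ₀, …, φₙ` produce the first row `(A, i√(1 - x²) B)` on `[-1, 1]`. -/
def RealizesRow (n : ℕ) (φ : ℕ → ℝ) (A B : ℂ[X]) : Prop :=
  ∀ x ∈ Set.Icc (-1 : ℝ) 1,
    qspProd n φ x 0 0 = A.eval (x : ℂ) ∧
      qspProd n φ x 0 1 = Complex.I * √(1 - x ^ 2) * B.eval (x : ℂ)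

/-- The first polynomial of the row `(A, i√(1 - x²) B)` multiplied on the right by
`(W(x) · diag(u, ū))⁻¹`, where `|u| = 1`. -/
noncomputable def peelLeft (u : ℂ) (A B : ℂ[X]) : ℂ[X] :=
  C (conj u) * (X * A) + C u * (B - X * (X * B))

/-- The second polynomial of the row `(A, i√(1 - x²) B)` multiplied on the right by
`(W(x) · diag(u, ū))⁻¹`, where `|u| = 1`. -/
noncomputable def peelRight (u : ℂ) (A B : ℂ[X]) : ℂ[X] :=
  C u * (X * B) - C (conj u) * A

variable {n : ℕ} {A B : ℂ[X]}

lemma IsQSPPair.right_mem (h : IsQSPPair (n + 1) A B) : B ∈ parityDegreeLE ℂ n :=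
  X_mul_mem_parityDegreeLE_succ_iff.1 h.X_mul_right_mem

lemma IsQSPPair.norm_coeff_eq (h : IsQSPPair (n + 1) A B) :
    ‖A.coeff (n + 1)‖ = ‖B.coeff n‖ := by
  set A' := A.map (starRingEnd ℂ)
  set B' := B.map (starRingEnd ℂ)
  have hA := natDegree_le_of_mem_parityDegreeLE h.left_mem
  have hA' := natDegree_le_of_mem_parityDegreeLE (map_mem_parityDegreeLE (starRingEnd ℂ) h.left_mem)
  have hXB := natDegree_le_of_mem_parityDegreeLE h.X_mul_right_mem
  have hB'mem : B' ∈ parityDegreeLE ℂ n := map_mem_parityDegreeLE _ h.right_mem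
  have hXB' := natDegree_le_of_mem_parityDegreeLE (X_mul_mem_parityDegreeLE_succ_iff.2 hB'mem)
  have hBB' := natDegree_le_of_mem_parityDegreeLE (mul_mem_parityDegreeLE h.right_mem hB'mem)
  have hunitary : A * A' + B * B' = 1 + (X * B) * (X * B') := by linear_combination h.unitary
  have htop := congrArg (coeff · ((n + 1) + (n + 1))) hunitary
  simp only [coeff_add] at htop
  rw [coeff_mul_add_eq_of_natDegree_le hA hA', coeff_mul_add_eq_of_natDegree_le hXB hXB',
    coeff_X_mul, coeff_X_mul, coeff_one, if_neg (by omega),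
    coeff_eq_zero_of_natDegree_lt (hBB'.trans_lt (by omega)), add_zero, zero_add, coeff_map,
    coeff_map, Complex.mul_conj', Complex.mul_conj'] at htop
  exact (sq_eq_sq₀ (norm_nonneg _) (norm_nonneg _)).1 (mod_cast htop)

lemma IsQSPPair.peel {u : ℂ} (h : IsQSPPair (n + 1) A B) (hu : u * conj u = 1)
    (hcoeff : conj u * A.coeff (n + 1) = u * B.coeff n) :
    IsQSPPair n (peelLeft u A B) (peelRight u A B) where
  left_mem := by
    have hXA : X * A ∈ parityDegreeLE ℂ (n + 2) := X_mul_mem_parityDegreeLE_succ_iff.2 h.left_mem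
    have hB : B ∈ parityDegreeLE ℂ (n + 2) := parityDegreeLE_mono (by omega) (by omega) h.right_mem
    have hXXB : X * (X * B) ∈ parityDegreeLE ℂ (n + 2) :=
      X_mul_mem_parityDegreeLE_succ_iff.2 h.X_mul_right_mem
    rw [peelLeft]
    refine mem_parityDegreeLE_of_coeff_eq_zero (add_mem (C_mul_mem_parityDegreeLE _ hXA)
      (C_mul_mem_parityDegreeLE _ (sub_mem hB hXXB))) ?_
    have hBtop : B.coeff (n + 2) = 0 := coeff_eq_zero_of_natDegree_lt
      ((natDegree_le_of_mem_parityDegreeLE h.right_mem).trans_lt (by omega))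
    simp only [coeff_add, coeff_sub, coeff_C_mul, coeff_X_mul, hBtop]
    linear_combination hcoeff
  X_mul_right_mem := by
    have hXA : X * A ∈ parityDegreeLE ℂ (n + 2) := X_mul_mem_parityDegreeLE_succ_iff.2 h.left_mem
    have hXXB : X * (X * B) ∈ parityDegreeLE ℂ (n + 2) :=
      X_mul_mem_parityDegreeLE_succ_iff.2 h.X_mul_right_mem
    have hpeel : X * peelRight u A B = C u * (X * (X * B)) - C (conj u) * (X * A) := by
      rw [peelRight]
      ring
    rw [hpeel]
    refine mem_parityDegreeLE_of_coeff_eq_zero (sub_mem (C_mul_mem_parityDegreeLE _ hXXB)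
      (C_mul_mem_parityDegreeLE _ hXA)) ?_
    simp only [coeff_sub, coeff_C_mul, coeff_X_mul]
    linear_combination -hcoeff
  unitary := by
    have hCu : (C u : ℂ[X]) * C (conj u) = 1 := by rw [← C_mul, hu, C_1]
    simp only [peelLeft, peelRight, Polynomial.map_add, Polynomial.map_sub, Polynomial.map_mul,
      map_C, map_X, Complex.conj_conj]
    linear_combination h.unitary + (A * A.map (starRingEnd ℂ) +
      (1 - X ^ 2) * (B * B.map (starRingEnd ℂ))) * hCu

lemma conj_exp_I_mul (θ : ℝ) :
    conj (Complex.exp (Complex.I * θ)) = Complex.exp (-(Complex.I * θ)) := by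
  simp [← Complex.exp_conj]

lemma exp_I_mul_mul_conj (θ : ℝ) :
    Complex.exp (Complex.I * θ) * conj (Complex.exp (Complex.I * θ)) = 1 := by
  rw [conj_exp_I_mul, ← Complex.exp_add, add_neg_cancel, Complex.exp_zero]

lemma exists_conj_exp_mul_eq {a b : ℂ} (hab : ‖a‖ = ‖b‖) :
    ∃ θ : ℝ, conj (Complex.exp (Complex.I * θ)) * a = Complex.exp (Complex.I * θ) * b := by
  refine ⟨(a.arg - b.arg) / 2, ?_⟩
  rw [conj_exp_I_mul]
  nth_rw 2 [← Complex.norm_mul_exp_arg_mul_I a]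
  nth_rw 3 [← Complex.norm_mul_exp_arg_mul_I b]
  rw [hab, mul_left_comm, mul_left_comm _ (‖b‖ : ℂ), ← Complex.exp_add, ← Complex.exp_add]
  congr 2
  push_cast
  ring

lemma RealizesRow.update_of_peel {φ : ℕ → ℝ} {θ : ℝ}
    (h : RealizesRow n φ (peelLeft (Complex.exp (Complex.I * θ)) A B)
      (peelRight (Complex.exp (Complex.I * θ)) A B)) :
    RealizesRow (n + 1) (Function.update φ (n + 1) θ) A B := by
  intro x hx
  obtain ⟨h0, h1⟩ := h x hx
  have hs : ((√(1 - x ^ 2) : ℝ) : ℂ) ^ 2 = 1 - (x : ℂ) ^ 2 := by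
    rw [← Complex.ofReal_pow, Real.sq_sqrt (by nlinarith [hx.1, hx.2])]
    push_cast
    ring
  have hu := exp_I_mul_mul_conj θ
  have hcongr : qspProd n (Function.update φ (n + 1) θ) x = qspProd n φ x :=
    qspProd_congr (fun j hj => Function.update_of_ne (by omega) _ _) x
  simp only [qspProd_succ, hcongr, Function.update_self, Matrix.mul_apply, Fin.sum_univ_two, h0, h1,
    Wmat, ePhiZ, Matrix.of_apply, Matrix.cons_val', Matrix.cons_val_zero, Matrix.cons_val_one,
    Matrix.cons_val_fin_one, ← conj_exp_I_mul, peelLeft, peelRight, eval_add, eval_sub, eval_mul,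
    eval_C, eval_X]
  set s : ℂ := ((√(1 - x ^ 2) : ℝ) : ℂ)
  set u := Complex.exp (Complex.I * θ)
  set α := A.eval (x : ℂ)
  set β := B.eval (x : ℂ)
  constructor
  · linear_combination α * hu + u * (u * (x * β) - conj u * α) * (s ^ 2 * Complex.I_sq - hs)
  · linear_combination Complex.I * s * β * hu

lemma IsQSPPair.exists_realizesRow_zero (h : IsQSPPair 0 A B) : ∃ φ, RealizesRow 0 φ A B := by
  obtain rfl : B = 0 := eq_zero_of_X_mul_mem_parityDegreeLE_zero h.X_mul_right_mem
  obtain ⟨a, rfl⟩ := natDegree_eq_zero.1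
    (Nat.le_zero.1 (natDegree_le_of_mem_parityDegreeLE h.left_mem))
  have ha : ‖a‖ = 1 := by
    have hsq : a * conj a = 1 := C_injective (by simpa using h.unitary)
    rw [Complex.mul_conj'] at hsq
    exact (pow_eq_one_iff_of_nonneg (norm_nonneg a) two_ne_zero).1 (mod_cast hsq)
  obtain ⟨θ, rfl⟩ := (Complex.norm_eq_one_iff a).1 ha
  exact ⟨fun _ => θ, fun x _ => by simp [qspProd, ePhiZ, mul_comm]⟩

theorem IsQSPPair.exists_realizesRow (h : IsQSPPair n A B) : ∃ φ, RealizesRow n φ A B := by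
  induction n generalizing A B with
  | zero => exact h.exists_realizesRow_zero
  | succ n ih =>
    obtain ⟨θ, hθ⟩ := exists_conj_exp_mul_eq h.norm_coeff_eq
    obtain ⟨φ, hφ⟩ := ih (h.peel (exp_I_mul_mul_conj θ) hθ)
    exact ⟨_, hφ.update_of_peel⟩

lemma isQSPPair_of_one_sub_sq_eq {P c d : ℝ[X]} (hP : P ∈ parityDegreeLE ℝ n)
    (hc : c ∈ parityDegreeLE ℝ n) (hd : X * d ∈ parityDegreeLE ℝ n)
    (h : 1 - P ^ 2 = c ^ 2 + (1 - X ^ 2) * d ^ 2) :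
    IsQSPPair n (P.map (algebraMap ℝ ℂ) + C Complex.I * c.map (algebraMap ℝ ℂ))
      (d.map (algebraMap ℝ ℂ)) where
  left_mem := add_mem (map_mem_parityDegreeLE _ hP)
    (C_mul_mem_parityDegreeLE _ (map_mem_parityDegreeLE _ hc))
  X_mul_right_mem := by simpa using map_mem_parityDegreeLE (algebraMap ℝ ℂ) hd
  unitary := by
    have hconj : (starRingEnd ℂ).comp (algebraMap ℝ ℂ) = algebraMap ℝ ℂ := by
      ext x
      simp
    have hI : (C Complex.I : ℂ[X]) ^ 2 = -1 := by rw [← C_pow, Complex.I_sq, C_neg, C_1]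
    have hmap := congrArg (Polynomial.map (algebraMap ℝ ℂ)) h
    simp only [Polynomial.map_add, Polynomial.map_sub, Polynomial.map_mul, Polynomial.map_pow,
      Polynomial.map_one, map_X] at hmap
    simp only [Polynomial.map_add, Polynomial.map_mul, Polynomial.map_map, hconj, map_C,
      Complex.conj_I, C_neg]
    linear_combination -hmap - c.map (algebraMap ℝ ℂ) ^ 2 * hI

end PhaseFactors

/-- real quantum signal processing. Every real polynomial of
degree at most `q`, with parity `q mod 2` and bounded by `1` on `[−1,1]`, is
the real part of the top-left entry of a QSP product for suitable phases. -/
theorem exists_qsp_phases (q : ℕ) (hq : 1 ≤ q) (P : Polynomial ℝ)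
    (hdeg : P.natDegree ≤ q)
    (hpar : ∀ x : ℝ, P.eval (-x) = (-1 : ℝ) ^ q * P.eval x)
    (hbound : ∀ x ∈ Set.Icc (-1 : ℝ) 1, |P.eval x| ≤ 1) :
    ∃ φ : ℕ → ℝ, ∀ x ∈ Set.Icc (-1 : ℝ) 1,
      P.eval x = (qspProd q φ x 0 0).re := by
  have hP : P ∈ parityDegreeLE ℝ q := mem_parityDegreeLE_of_eval_neg hdeg hpar
  have hmem : 1 - P ^ 2 ∈ parityDegreeLE ℝ (2 * q) := by
    rw [pow_two]
    exact sub_mem (one_mem_parityDegreeLE_two_mul q) (two_mul q ▸ mul_mem_parityDegreeLE hP hP)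
  have hnonneg : ∀ x ∈ Set.Icc (-1 : ℝ) 1, 0 ≤ (1 - P ^ 2).eval x := fun x hx => by
    simpa using hbound x hx
  obtain ⟨c, d, hc, hd, h⟩ := isCircleNorm_of_nonneg hmem hnonneg
  obtain ⟨φ, hφ⟩ := (isQSPPair_of_one_sub_sq_eq hP hc hd h).exists_realizesRow
  refine ⟨φ, fun x hx => ?_⟩
  have heval (p : ℝ[X]) : (p.map (algebraMap ℝ ℂ)).eval (x : ℂ) = (p.eval x : ℝ) :=
    eval_map_apply (algebraMap ℝ ℂ) x
  simp [(hφ x hx).1, heval]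

end QSP
end

section
/- Let m ≥ 1, N ≥ 1, and let U be a unitary on ℂ^{2^m} ⊗ ℂ^N such that the compression A := (⟨0|^{⊗m} ⊗ I_N)·U·(|0⟩^{⊗m} ⊗ I_N) is Hermitian. Let q ≥ 1 and let P be a real polynomial with deg P ≤ q, parity q mod 2 (P(−x) = (−1)^q P(x)), and |P(x)| ≤ 1 for all x ∈ [−1, 1]. Set Π = |0⟩⟨0|^{⊗m} ⊗ I_N, and for φ ∈ ℝ let e^{iφ(2Π−I)} = e^{iφ}·Π + e^{−iφ}·(I − Π). For Φ = (φ₁, …, φ_q) ∈ ℝ^q define the alternating phase modulation sequence U_Φ = e^{iφ₁(2Π−I)}·U·∏_{j=1}^{(q−1)/2}( e^{iφ_{2j}(2Π−I)}·U†·e^{iφ_{2j+1}(2Π−I)}·U ) when q is odd, and U_Φ = ∏_{j=1}^{q/2}( e^{iφ_{2j−1}(2Π−I)}·U†·e^{iφ_{2j}(2Π−I)}·U ) when q is even. Then there exists Φ ∈ ℝ^q such that (⟨0|^{⊗m} ⊗ I_N)·(1/2)(U_Φ + U_{−Φ})·(|0⟩^{⊗m} ⊗ I_N) = P(A), where P(A)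 is the evaluation of the polynomial P at the matrix A, and U_{−Φ} denotes the same sequence with all phases negated. -/
namespace QSVT

open Matrix

/-- The projector `Π = |0⟩⟨0|^{⊗m} ⊗ I_N` on `ℂ^{2^m} ⊗ ℂ^N`. -/
def Proj0 (m N : ℕ) : Matrix (Fin (2 ^ m) × Fin N) (Fin (2 ^ m) × Fin N) ℂ :=
  Matrix.of fun x y => if x.1 = 0 ∧ y.1 = 0 ∧ x.2 = y.2 then 1 else 0

/-- The phase operator `e^{iφ(2Π−I)} = e^{iφ}·Π + e^{−iφ}·(I − Π)`. -/
noncomputable def phaseOp (m N : ℕ) (φ : ℝ) :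
    Matrix (Fin (2 ^ m) × Fin N) (Fin (2 ^ m) × Fin N) ℂ :=
  Complex.exp (Complex.I * φ) • Proj0 m N +
    Complex.exp (-(Complex.I * φ)) • (1 - Proj0 m N)

/-- The alternating phase modulation sequence `U_Φ`: for odd `q`,
`e^{iφ₁(2Π−I)}·U·∏_{j=1}^{(q−1)/2}(e^{iφ_{2j}(2Π−I)}·U†·e^{iφ_{2j+1}(2Π−I)}·U)`;
for even `q`, `∏_{j=1}^{q/2}(e^{iφ_{2j−1}(2Π−I)}·U†·e^{iφ_{2j}(2Π−I)}·U)`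
(products ordered left to right by increasing `j`). -/
noncomputable def altPhaseSeq (m N : ℕ)
    (U : Matrix (Fin (2 ^ m) × Fin N) (Fin (2 ^ m) × Fin N) ℂ)
    (q : ℕ) (Φ : ℕ → ℝ) :
    Matrix (Fin (2 ^ m) × Fin N) (Fin (2 ^ m) × Fin N) ℂ :=
  if q % 2 = 1 then
    phaseOp m N (Φ 1) * U *
      ((List.range ((q - 1) / 2)).map fun j =>
        phaseOp m N (Φ (2 * j + 2)) * Uᴴ * phaseOp m N (Φ (2 * j + 3)) * U).prod
  else
    ((List.range (q / 2)).map fun j =>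
      phaseOp m N (Φ (2 * j + 1)) * Uᴴ * phaseOp m N (Φ (2 * j + 2)) * U).prod

/-!
On `[-1, 1]` the even polynomial `1 - P²` is nonnegative, so by a Markov–Lukács factorization in the
variable `x²` it equals `B² + (1 - x²) D²` with real `B` and `D` of degrees at most `q` and `q - 1`
and of parities `q` and `q - 1`. The column `(P + iB, √(1 - x²) D)` thus has norm one, and its two
components have leading coefficients of equal modulus: a phase rotation makes these equal, and the
signal reflection `[[x, √(1 - x²)], [√(1 - x²), -x]]` then cancels them. Iterating reduces the
column to a scalar, which exhibits it as a product of phase rotations and signal reflections.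
Negating the phases conjugates the coefficients, so averaging leaves `P`.

With `E = |0⟩^{⊗m} ⊗ I_N`, left multiplication by `U` acts on the block columns
`E p(A) + (1 - Π) U† E r(A)` as the signal reflection acts on `(p, √(1 - x²) r)`, exchanging the
roles of `U` and `U†`. Hence the compression of `U_Φ` is the first component of the product with
phases `Φ`, evaluated at `A`.
-/

section

open Polynomial
open scoped ComplexConjugate

/-! ### Polynomials of definite parity and their pairs -/

section Parity

variable {R : Type*} [CommRing R] {m n : ℕ}

/-- The polynomial `p` has the parity of `n`: it is even for even `n` and odd for odd `n`. -/
structure HasParity (n : ℕ) (p : R[X]) : Prop where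
  comp_neg_X : p.comp (-X) = (-1) ^ n * p

theorem HasParity.map {S : Type*} [CommRing S] (f : R →+* S) {p : R[X]} (hp : HasParity n p) :
    HasParity n (p.map f) :=
  ⟨by simpa [Polynomial.map_comp] using congrArg (Polynomial.map f) hp.comp_neg_X⟩

theorem HasParity.sq {p : R[X]} (hp : HasParity n p) : HasParity 0 (p ^ 2) :=
  ⟨by rw [pow_comp, hp.comp_neg_X, mul_pow, ← pow_mul, (even_two.mul_left n).neg_one_pow, pow_zero]⟩

theorem HasParity.coeff_eq_zero [IsAddTorsionFree R] {p : R[X]} (hp : HasParity n p) {k : ℕ}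
    (hk : Odd (n + k)) : p.coeff k = 0 := by
  have hcoeff : (-1) ^ k * p.coeff k = (-1) ^ n * p.coeff k := by
    have h := congrArg (coeff · k) hp.comp_neg_X
    rwa [show (-X : R[X]) = C (-1) * X by simp, comp_C_mul_X_coeff, mul_comm,
      show ((-1) ^ n : R[X]) = C ((-1) ^ n) by simp, coeff_C_mul] at h
  refine self_eq_neg.mp ?_
  calc p.coeff k = (-1) ^ k * ((-1) ^ k * p.coeff k) := by
        rw [← mul_assoc, ← mul_pow, neg_one_mul, neg_neg, one_pow, one_mul]
    _ = (-1) ^ (n + k) * p.coeff k := by rw [hcoeff, ← mul_assoc, pow_add, mul_comm ((-1) ^ k)]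
    _ = -p.coeff k := by rw [hk.neg_one_pow, neg_one_mul]

theorem HasParity.contract_two_comp_X_sq [IsAddTorsionFree R] {p : R[X]} (hp : HasParity 0 p) :
    (contract 2 p).comp (X ^ 2) = p := by
  rw [← expand_eq_comp_X_pow]
  ext k
  rw [coeff_expand two_pos]
  split_ifs with hk
  · rw [coeff_contract two_ne_zero, Nat.div_mul_cancel hk]
  · rw [← even_iff_two_dvd, Nat.not_even_iff_odd, ← zero_add k] at hk
    exact (hp.coeff_eq_zero hk).symm

/-- The pair `(p, r)` stands for the function `p(x) + i √(1 - x²) r(x)`, a trigonometric polynomial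
of degree at most `n` in `arccos x` whose frequencies have the parity of `n`. The degree bound on
`X * r` encodes `deg r ≤ n - 1`, including `r = 0` for `n = 0`. -/
structure IsChebyshevPair (n : ℕ) (z : R[X] × R[X]) : Prop where
  natDegree_fst : z.1.natDegree ≤ n
  natDegree_X_mul_snd : (X * z.2).natDegree ≤ n
  parity_fst : HasParity n z.1
  parity_snd : HasParity (n + 1) z.2

theorem IsChebyshevPair.coeff_snd_eq_zero {z : R[X] × R[X]} (hz : IsChebyshevPair n z) {k : ℕ}
    (hk : n ≤ k) : z.2.coeff k = 0 := by
  rw [← coeff_X_mul]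
  exact coeff_eq_zero_of_natDegree_lt (hz.natDegree_X_mul_snd.trans_lt (Nat.lt_succ_of_le hk))

theorem IsChebyshevPair.natDegree_snd {z : R[X] × R[X]} (hz : IsChebyshevPair (n + 1) z) :
    z.2.natDegree ≤ n :=
  natDegree_le_iff_coeff_eq_zero.mpr fun _ hk => hz.coeff_snd_eq_zero hk

theorem IsChebyshevPair.mul {z w : R[X] × R[X]} (hz : IsChebyshevPair m z)
    (hw : IsChebyshevPair n w) :
    IsChebyshevPair (m + n) (z.1 * w.1 - (1 - X ^ 2) * (z.2 * w.2), z.1 * w.2 + w.1 * z.2) where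
  natDegree_fst := by
    have hz₂ : z.2.natDegree ≤ m :=
      natDegree_le_iff_coeff_eq_zero.mpr fun _ hk => hz.coeff_snd_eq_zero hk.le
    have hw₂ : w.2.natDegree ≤ n :=
      natDegree_le_iff_coeff_eq_zero.mpr fun _ hk => hw.coeff_snd_eq_zero hk.le
    rw [show z.1 * w.1 - (1 - X ^ 2) * (z.2 * w.2) =
      z.1 * w.1 - z.2 * w.2 + X * z.2 * (X * w.2) by ring]
    exact natDegree_add_le_of_degree_le
      (natDegree_sub_le_of_le (natDegree_mul_le_of_le hz.natDegree_fst hw.natDegree_fst)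
        (natDegree_mul_le_of_le hz₂ hw₂) |>.trans_eq (max_self _))
      (natDegree_mul_le_of_le hz.natDegree_X_mul_snd hw.natDegree_X_mul_snd)
  natDegree_X_mul_snd := by
    rw [show X * (z.1 * w.2 + w.1 * z.2) = z.1 * (X * w.2) + X * z.2 * w.1 by ring]
    exact natDegree_add_le_of_degree_le
      (natDegree_mul_le_of_le hz.natDegree_fst hw.natDegree_X_mul_snd)
      (natDegree_mul_le_of_le hz.natDegree_X_mul_snd hw.natDegree_fst)
  parity_fst.comp_neg_X := by
    simp only [sub_comp, mul_comp, pow_comp, one_comp, X_comp, hz.parity_fst.comp_neg_X,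
      hz.parity_snd.comp_neg_X, hw.parity_fst.comp_neg_X, hw.parity_snd.comp_neg_X]
    ring
  parity_snd.comp_neg_X := by
    simp only [add_comp, mul_comp, hz.parity_fst.comp_neg_X, hz.parity_snd.comp_neg_X,
      hw.parity_fst.comp_neg_X, hw.parity_snd.comp_neg_X]
    ring

end Parity

/-! ### Nonnegative polynomials on an interval -/

section Nonneg

variable {a b : ℝ} {G H L : ℝ[X]}

theorem eval_nonneg_of_mul_nonneg_on_Icc (hab : a < b) (hL₀ : L ≠ 0)
    (hL : ∀ y ∈ Set.Icc a b, 0 ≤ L.eval y) (hLH : ∀ y ∈ Set.Icc a b, 0 ≤ (L * H).eval y) :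
    ∀ y ∈ Set.Icc a b, 0 ≤ H.eval y := by
  have hdense : Dense {y | L.IsRoot y}ᶜ :=
    (finite_setOfPred_isRoot hL₀).countable.dense_compl ℝ
  have hclosure : Set.Icc a b ⊆ closure (Set.Ioo a b ∩ {y | L.IsRoot y}ᶜ) := by
    rw [← closure_Ioo hab.ne]
    exact closure_minimal (hdense.open_subset_closure_inter isOpen_Ioo) isClosed_closure
  have hnonneg : closure (Set.Ioo a b ∩ {y | L.IsRoot y}ᶜ) ⊆ {y | 0 ≤ H.eval y} := by
    refine closure_minimal (fun y ⟨hy, hroot⟩ => ?_) (isClosed_le continuous_const H.continuous)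
    have hy' := Set.Ioo_subset_Icc_self hy
    exact nonneg_of_mul_nonneg_right (by simpa only [eval_mul] using hLH y hy')
      ((hL y hy').lt_of_ne' hroot)
  exact fun y hy => hnonneg (hclosure hy)

theorem sq_X_sub_C_dvd_of_nonneg_on_Icc (hG : ∀ y ∈ Set.Icc a b, 0 ≤ G.eval y) {x : ℝ}
    (hx : x ∈ Set.Ioo a b) (hroot : G.IsRoot x) : (X - C x) ^ 2 ∣ G := by
  rcases eq_or_ne G 0 with rfl | hG₀
  · exact dvd_zero _
  have hmin : IsLocalMin (G.eval ·) x := by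
    filter_upwards [Icc_mem_nhds hx.1 hx.2] with y hy
    exact hroot.symm ▸ hG y hy
  have hderiv : G.derivative.IsRoot x := by simpa using hmin.deriv_eq_zero
  exact (le_rootMultiplicity_iff hG₀).mp
    ((one_lt_rootMultiplicity_iff_isRoot hG₀).mpr ⟨hroot, hderiv⟩)

theorem exists_dvd_nonneg_on_Icc (hG : ∀ y ∈ Set.Icc a b, 0 ≤ G.eval y) (hdeg : G.natDegree ≠ 0) :
    ∃ L, L ∣ G ∧ (∀ y ∈ Set.Icc a b, 0 ≤ L.eval y) ∧
      (L.natDegree = 1 ∨ ∃ u v : ℝ, L = (X - C u) ^ 2 + C (v ^ 2)) := by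
  obtain ⟨z, hz⟩ := Complex.exists_root (f := G.map (algebraMap ℝ ℂ)) (by
    rwa [degree_map, ← natDegree_pos_iff_degree_pos, Nat.pos_iff_ne_zero])
  rw [IsRoot, eval_map_algebraMap] at hz
  by_cases him : z.im = 0
  · lift z to ℝ using him
    have hroot : G.IsRoot z := by
      rw [← Complex.coe_algebraMap, aeval_algebraMap_apply] at hz
      simpa using hz
    rcases le_or_gt z a with hza | haz
    · exact ⟨X - C z, dvd_iff_isRoot.mpr hroot, fun y hy => by simpa using hza.trans hy.1,
        Or.inl (natDegree_X_sub_C z)⟩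
    rcases le_or_gt b z with hbz | hzb
    · refine ⟨-(X - C z), (dvd_iff_isRoot.mpr hroot).neg_left, fun y hy => ?_, Or.inl ?_⟩
      · simpa using hy.2.trans hbz
      · rw [natDegree_neg, natDegree_X_sub_C]
    · exact ⟨(X - C z) ^ 2, sq_X_sub_C_dvd_of_nonneg_on_Icc hG ⟨haz, hzb⟩ hroot,
        fun y _ => by simpa using sq_nonneg (y - z), Or.inr ⟨z, 0, by simp⟩⟩
  · refine ⟨(X - C z.re) ^ 2 + C (z.im ^ 2), ?_, fun y _ => ?_, Or.inr ⟨z.re, z.im, rfl⟩⟩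
    · convert quadratic_dvd_of_aeval_eq_zero_im_ne_zero G hz him using 1
      rw [Complex.sq_norm, Complex.normSq_apply]
      simp only [map_mul, map_add, map_pow, map_ofNat]
      ring
    · simp only [eval_add, eval_pow, eval_sub, eval_X, eval_C]
      positivity

end Nonneg

/-! ### Complementary polynomials -/

section ChebyshevNorm

variable {m n : ℕ} {F G : ℝ[X]}

/-- `F` is the squared modulus `p² + (1 - x²) r²` on `[-1, 1]` of a real Chebyshev pair `(p, r)`. -/
def IsChebyshevNorm (n : ℕ) (F : ℝ[X]) : Prop :=
  ∃ z : ℝ[X] × ℝ[X], IsChebyshevPair n z ∧ F = z.1 ^ 2 + (1 - X ^ 2) * z.2 ^ 2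

theorem IsChebyshevNorm.mul (hF : IsChebyshevNorm m F) (hG : IsChebyshevNorm n G) :
    IsChebyshevNorm (m + n) (F * G) := by
  obtain ⟨z, hz, rfl⟩ := hF
  obtain ⟨w, hw, rfl⟩ := hG
  exact ⟨_, hz.mul hw, by ring⟩

theorem isChebyshevNorm_zero_C {c : ℝ} (hc : 0 ≤ c) : IsChebyshevNorm 0 (C c) := by
  refine ⟨(C √c, 0), ⟨by simp, by simp, ⟨by simp⟩, ⟨by simp⟩⟩, ?_⟩
  simp [← C_pow, Real.sq_sqrt hc]

theorem isChebyshevNorm_linear {L : ℝ[X]} (hL : L.natDegree ≤ 1) (h₀ : 0 ≤ L.eval 0)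
    (h₁ : 0 ≤ L.eval 1) : IsChebyshevNorm 1 (L.comp (X ^ 2)) := by
  obtain ⟨α, β, rfl⟩ := exists_eq_X_add_C_of_natDegree_le_one hL
  simp only [eval_add, eval_mul, eval_C, eval_X, mul_zero, zero_add, mul_one] at h₀ h₁
  refine ⟨(C √(α + β) * X, C √β), ⟨by dsimp only; compute_degree, by dsimp only; compute_degree,
    ⟨by simp⟩, ⟨by simp⟩⟩, ?_⟩
  simp only [mul_pow, ← C_pow, Real.sq_sqrt h₀, Real.sq_sqrt h₁, C_add, add_comp, mul_comp, C_comp,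
    X_comp]
  ring

theorem isChebyshevNorm_one (n : ℕ) : IsChebyshevNorm n 1 := by
  induction n with
  | zero => exact isChebyshevNorm_zero_C zero_le_one
  | succ n ih => simpa using ih.mul (isChebyshevNorm_linear (L := 1) (by simp) (by simp) (by simp))

theorem isChebyshevNorm_C (n : ℕ) {c : ℝ} (hc : 0 ≤ c) : IsChebyshevNorm n (C c) := by
  simpa using (isChebyshevNorm_zero_C hc).mul (isChebyshevNorm_one n)

/- With `s = |u + iv|` and `t = |1 - u - iv|`, the square of `s - (s + t) x²` agrees with the given
quadratic in `x²` at `x² = 0` and `x² = 1`, so the two differ by a multiple of `x² (1 - x²)`; the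
triangle inequality `1 ≤ s + t` makes the factor nonnegative. -/
theorem isChebyshevNorm_quadratic (u v : ℝ) :
    IsChebyshevNorm 2 (((X - C u) ^ 2 + C (v ^ 2)).comp (X ^ 2)) := by
  set s := √(u ^ 2 + v ^ 2)
  set t := √((1 - u) ^ 2 + v ^ 2)
  have hs : s ^ 2 = u ^ 2 + v ^ 2 := Real.sq_sqrt (by positivity)
  have ht : t ^ 2 = (1 - u) ^ 2 + v ^ 2 := Real.sq_sqrt (by positivity)
  have hst : 1 ≤ s + t := by
    have hus : |u| ≤ s := Real.abs_le_sqrt (le_add_of_nonneg_right (sq_nonneg v))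
    have hut : |1 - u| ≤ t := Real.abs_le_sqrt (le_add_of_nonneg_right (sq_nonneg v))
    linarith [le_abs_self u, le_abs_self (1 - u)]
  set l := √((s + t) ^ 2 - 1)
  have hl : l ^ 2 = (s + t) ^ 2 - 1 := Real.sq_sqrt (sub_nonneg.mpr (one_le_pow₀ hst))
  refine ⟨(C s - C (s + t) * X ^ 2, C l * X), ⟨by dsimp only; compute_degree, ?_,
    ⟨by simp⟩, ⟨by simp [Odd.neg_one_pow (n := 3) (by decide)]⟩⟩, ?_⟩
  · rw [mul_left_comm, ← sq]
    compute_degree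
  · apply Polynomial.funext
    intro x
    simp only [eval_comp, eval_add, eval_sub, eval_mul, eval_pow, eval_X, eval_C, eval_one]
    linear_combination (-(1 - x ^ 2) * x ^ 2) * hl + (x ^ 2 - 1) * hs - x ^ 2 * ht

/- This is the Markov–Lukács theorem on `[0, 1]`, read in the variable `x²`. -/
theorem isChebyshevNorm_comp_X_sq (hdeg : G.natDegree ≤ n)
    (hG : ∀ y ∈ Set.Icc (0 : ℝ) 1, 0 ≤ G.eval y) : IsChebyshevNorm n (G.comp (X ^ 2)) := by
  induction n using Nat.strong_induction_on generalizing G with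
  | _ n ih =>
  by_cases hconst : G.natDegree = 0
  · obtain ⟨c, rfl⟩ := natDegree_eq_zero.mp hconst
    simpa using isChebyshevNorm_C n (by simpa using hG 0 (by simp))
  obtain ⟨L, ⟨H, rfl⟩, hL, hshape⟩ := exists_dvd_nonneg_on_Icc hG hconst
  have hLH : L * H ≠ 0 := fun h => hconst (by rw [h, natDegree_zero])
  have hH := eval_nonneg_of_mul_nonneg_on_Icc zero_lt_one (left_ne_zero_of_mul hLH) hL hG
  rw [natDegree_mul (left_ne_zero_of_mul hLH) (right_ne_zero_of_mul hLH)] at hdeg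
  obtain ⟨d, hd₀, hd, hLnorm⟩ : ∃ d, 0 < d ∧ L.natDegree = d ∧
      IsChebyshevNorm d (L.comp (X ^ 2)) := by
    rcases hshape with hlin | ⟨u, v, rfl⟩
    · exact ⟨1, one_pos, hlin, isChebyshevNorm_linear hlin.le (hL 0 (by simp)) (hL 1 (by simp))⟩
    · exact ⟨2, two_pos, by compute_degree!, isChebyshevNorm_quadratic u v⟩
  have hnorm := hLnorm.mul (ih (n - d) (by omega) (by omega) hH)
  rwa [← mul_comp, Nat.add_sub_cancel' (by omega)] at hnorm

theorem isChebyshevNorm_of_nonneg (hdeg : F.natDegree ≤ 2 * n) (hpar : HasParity 0 F)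
    (hF : ∀ x ∈ Set.Icc (-1 : ℝ) 1, 0 ≤ F.eval x) : IsChebyshevNorm n F := by
  have hcontract := hpar.contract_two_comp_X_sq
  rw [← hcontract]
  refine isChebyshevNorm_comp_X_sq ?_ fun y hy => ?_
  · rw [← hcontract, natDegree_comp, natDegree_X_pow] at hdeg
    omega
  · have hsqrt := hF √y ⟨by linarith [Real.sqrt_nonneg y], Real.sqrt_le_one.mpr hy.2⟩
    rwa [← hcontract, eval_comp, eval_pow, eval_X, Real.sq_sqrt hy.1] at hsqrt

end ChebyshevNorm

/-! ### Quantum signal processing -/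

section SignalColumns

/-- The signal reflection with matrix `[[x, √(1 - x²)], [√(1 - x²), -x]]`, acting on
`(p, √(1 - x²) r)`. -/
noncomputable def signal {R : Type*} [CommRing R] (z : R[X] × R[X]) : R[X] × R[X] :=
  (X * z.1 + (1 - X ^ 2) * z.2, z.1 - X * z.2)

/-- The phase rotation `diag(e^{iφ}, e^{-iφ})`. -/
noncomputable def phaseRotation (φ : ℝ) (z : ℂ[X] × ℂ[X]) : ℂ[X] × ℂ[X] :=
  (Complex.exp (Complex.I * φ) • z.1, Complex.exp (-(Complex.I * φ)) • z.2)

/-- Complex conjugation of the coefficients of both polynomials. -/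
noncomputable def conjPair (z : ℂ[X] × ℂ[X]) : ℂ[X] × ℂ[X] :=
  (z.1.map (starRingEnd ℂ), z.2.map (starRingEnd ℂ))

/-- The pair `(p, r)` such that the column `(p, √(1 - x²) r)` is the first column of the product of
`n` factors `phaseRotation (Φ k) ∘ signal`, with `k = 0` leftmost. -/
noncomputable def qspPair : ℕ → (ℕ → ℝ) → ℂ[X] × ℂ[X]
  | 0, _ => (1, 0)
  | n + 1, Φ => phaseRotation (Φ 0) (signal (qspPair n fun i => Φ (i + 1)))

/-- The polynomial `|p|² + (1 - x²) |r|²`, the squared norm of the column `(p, √(1 - x²) r)`. -/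
noncomputable def columnNormSq (z : ℂ[X] × ℂ[X]) : ℂ[X] :=
  z.1 * z.1.map (starRingEnd ℂ) + (1 - X ^ 2) * (z.2 * z.2.map (starRingEnd ℂ))

theorem signal_signal {R : Type*} [CommRing R] (z : R[X] × R[X]) : signal (signal z) = z := by
  ext1 <;> simp only [signal] <;> ring

theorem signal_smul {R : Type*} [CommRing R] (c : R) (z : R[X] × R[X]) :
    signal (c • z) = c • signal z := by
  ext1 <;> simp [signal, smul_add, smul_sub]

theorem phaseRotation_smul (φ : ℝ) (c : ℂ) (z : ℂ[X] × ℂ[X]) :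
    phaseRotation φ (c • z) = c • phaseRotation φ z := by
  ext1 <;> simp only [phaseRotation, Prod.smul_fst, Prod.smul_snd, smul_comm c]

theorem phaseRotation_phaseRotation_neg (φ : ℝ) (z : ℂ[X] × ℂ[X]) :
    phaseRotation φ (phaseRotation (-φ) z) = z := by
  ext1 <;> simp [phaseRotation, smul_smul, ← Complex.exp_add]

theorem columnNormSq_signal (z : ℂ[X] × ℂ[X]) : columnNormSq (signal z) = columnNormSq z := by
  simp only [columnNormSq, signal, Polynomial.map_add, Polynomial.map_sub, Polynomial.map_mul,
    Polynomial.map_pow, Polynomial.map_one, map_X]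
  ring

theorem columnNormSq_phaseRotation (φ : ℝ) (z : ℂ[X] × ℂ[X]) :
    columnNormSq (phaseRotation φ z) = columnNormSq z := by
  simp [columnNormSq, phaseRotation, Polynomial.map_smul, smul_smul, ← Complex.exp_conj,
    ← Complex.exp_add]

theorem signal_conjPair (z : ℂ[X] × ℂ[X]) : signal (conjPair z) = conjPair (signal z) := by
  ext1 <;> simp [signal, conjPair]

theorem phaseRotation_neg_conjPair (φ : ℝ) (z : ℂ[X] × ℂ[X]) :
    phaseRotation (-φ) (conjPair z) = conjPair (phaseRotation φ z) := by
  ext1 <;> simp [phaseRotation, conjPair, Polynomial.map_smul, ← Complex.exp_conj]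

theorem qspPair_neg (n : ℕ) (Φ : ℕ → ℝ) :
    qspPair n (fun i => -Φ i) = conjPair (qspPair n Φ) := by
  induction n generalizing Φ with
  | zero => simp [qspPair, conjPair]
  | succ n ih =>
    rw [qspPair, ih, signal_conjPair, phaseRotation_neg_conjPair, qspPair]

theorem columnNormSq_coeff_two_mul {n : ℕ} {z : ℂ[X] × ℂ[X]} (hz : IsChebyshevPair (n + 1) z) :
    (columnNormSq z).coeff ((n + 1) + (n + 1)) =
      z.1.coeff (n + 1) * conj (z.1.coeff (n + 1)) - z.2.coeff n * conj (z.2.coeff n) := by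
  have hsplit : columnNormSq z = z.1 * z.1.map (starRingEnd ℂ) + z.2 * z.2.map (starRingEnd ℂ) -
      X * z.2 * (X * z.2).map (starRingEnd ℂ) := by
    simp only [columnNormSq, Polynomial.map_mul, map_X]
    ring
  have hlow : (z.2 * z.2.map (starRingEnd ℂ)).natDegree < (n + 1) + (n + 1) :=
    (natDegree_mul_le_of_le hz.natDegree_snd (natDegree_map_le.trans hz.natDegree_snd)).trans_lt
      (by omega)
  rw [hsplit, coeff_sub, coeff_add, coeff_eq_zero_of_natDegree_lt hlow,
    coeff_mul_add_eq_of_natDegree_le hz.natDegree_fst (natDegree_map_le.trans hz.natDegree_fst),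
    coeff_mul_add_eq_of_natDegree_le hz.natDegree_X_mul_snd
      (natDegree_map_le.trans hz.natDegree_X_mul_snd),
    coeff_map, coeff_map, coeff_X_mul, add_zero]

theorem norm_coeff_eq_of_columnNormSq_eq_one {n : ℕ} {z : ℂ[X] × ℂ[X]}
    (hz : IsChebyshevPair (n + 1) z) (hnorm : columnNormSq z = 1) :
    ‖z.1.coeff (n + 1)‖ = ‖z.2.coeff n‖ := by
  have hlead := columnNormSq_coeff_two_mul hz
  rw [hnorm, coeff_one, if_neg (by omega), Complex.mul_conj', Complex.mul_conj'] at hlead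
  have hsq : ‖z.1.coeff (n + 1)‖ ^ 2 = ‖z.2.coeff n‖ ^ 2 := by
    exact_mod_cast sub_eq_zero.mp hlead.symm
  exact (sq_eq_sq₀ (norm_nonneg _) (norm_nonneg _)).mp hsq

theorem exists_exp_neg_mul_eq_exp_mul {a b : ℂ} (hab : ‖a‖ = ‖b‖) :
    ∃ φ : ℝ, Complex.exp (-(Complex.I * φ)) * a = Complex.exp (Complex.I * φ) * b := by
  refine ⟨(a.arg - b.arg) / 2, ?_⟩
  calc _ = Complex.exp (-(Complex.I * ((a.arg - b.arg) / 2 : ℝ))) *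
        (‖a‖ * Complex.exp (a.arg * Complex.I)) := by rw [Complex.norm_mul_exp_arg_mul_I]
    _ = Complex.exp (Complex.I * ((a.arg - b.arg) / 2 : ℝ)) *
        (‖b‖ * Complex.exp (b.arg * Complex.I)) := by
      rw [hab, mul_left_comm, mul_left_comm _ (‖b‖ : ℂ), ← Complex.exp_add, ← Complex.exp_add]
      congr 2
      push_cast
      ring
    _ = _ := by rw [Complex.norm_mul_exp_arg_mul_I]

theorem IsChebyshevPair.phaseRotation {n : ℕ} {z : ℂ[X] × ℂ[X]} (hz : IsChebyshevPair n z) (φ : ℝ) :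
    IsChebyshevPair n (phaseRotation φ z) where
  natDegree_fst := (natDegree_smul_le _ _).trans hz.natDegree_fst
  natDegree_X_mul_snd := by
    rw [QSVT.phaseRotation, mul_smul_comm]
    exact (natDegree_smul_le _ _).trans hz.natDegree_X_mul_snd
  parity_fst.comp_neg_X := by
    simp only [QSVT.phaseRotation, smul_comp, hz.parity_fst.comp_neg_X, mul_smul_comm]
  parity_snd.comp_neg_X := by
    simp only [QSVT.phaseRotation, smul_comp, hz.parity_snd.comp_neg_X, mul_smul_comm]

/- Equal top coefficients cancel in `z.1 - X * z.2`; its next coefficient vanishes by parity, and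
`X * z.1 + (1 - X ^ 2) * z.2 = X * (z.1 - X * z.2) + z.2`. -/
theorem IsChebyshevPair.signal {R : Type*} [CommRing R] [IsAddTorsionFree R] {n : ℕ}
    {z : R[X] × R[X]} (hz : IsChebyshevPair (n + 1) z) (hlead : z.1.coeff (n + 1) = z.2.coeff n) :
    IsChebyshevPair n (signal z) := by
  have hparity : HasParity (n + 1) (QSVT.signal z).2 := by
    constructor
    simp only [QSVT.signal, sub_comp, mul_comp, X_comp, hz.parity_fst.comp_neg_X,
      hz.parity_snd.comp_neg_X]
    ring
  have hdeg : (X * (QSVT.signal z).2).natDegree ≤ n := by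
    refine natDegree_le_iff_coeff_eq_zero.mpr fun k hk => ?_
    obtain ⟨k, rfl⟩ := Nat.exists_eq_add_one_of_ne_zero (Nat.ne_zero_of_lt hk)
    rw [coeff_X_mul]
    rcases (Nat.le_of_lt_succ hk).eq_or_lt with rfl | hk
    · exact hparity.coeff_eq_zero ⟨n, by ring⟩
    obtain ⟨k, rfl⟩ := Nat.exists_eq_add_one_of_ne_zero (Nat.ne_zero_of_lt hk)
    rw [QSVT.signal, coeff_sub, coeff_X_mul]
    rcases (Nat.le_of_lt_succ hk).eq_or_lt with rfl | hk
    · rw [hlead, sub_self]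
    · rw [coeff_eq_zero_of_natDegree_lt (hz.natDegree_fst.trans_lt (Nat.succ_lt_succ hk)),
        hz.coeff_snd_eq_zero hk, sub_zero]
  refine ⟨?_, hdeg, ⟨?_⟩, hparity⟩
  · rw [show (QSVT.signal z).1 = X * (QSVT.signal z).2 + z.2 by simp only [QSVT.signal]; ring]
    exact natDegree_add_le_of_degree_le hdeg hz.natDegree_snd
  · simp only [QSVT.signal, add_comp, sub_comp, mul_comp, pow_comp, one_comp, X_comp,
      hz.parity_fst.comp_neg_X, hz.parity_snd.comp_neg_X]
    ring

theorem exists_isChebyshevPair_signal_phaseRotation {n : ℕ} {z : ℂ[X] × ℂ[X]}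
    (hz : IsChebyshevPair (n + 1) z) (hnorm : columnNormSq z = 1) :
    ∃ φ : ℝ, IsChebyshevPair n (signal (phaseRotation (-φ) z)) := by
  obtain ⟨φ, hφ⟩ := exists_exp_neg_mul_eq_exp_mul (norm_coeff_eq_of_columnNormSq_eq_one hz hnorm)
  exact ⟨φ, (hz.phaseRotation (-φ)).signal (by simpa [phaseRotation] using hφ)⟩

theorem exists_eq_smul_qspPair (n : ℕ) {z : ℂ[X] × ℂ[X]} (hz : IsChebyshevPair n z)
    (hnorm : columnNormSq z = 1) :
    ∃ (Φ : ℕ → ℝ) (θ : ℝ), z = Complex.exp (Complex.I * θ) • qspPair n Φ := by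
  induction n generalizing z with
  | zero =>
    obtain ⟨p, r⟩ := z
    obtain ⟨c, rfl⟩ := natDegree_eq_zero.mp (Nat.le_zero.mp hz.natDegree_fst)
    obtain rfl : r = 0 := ext fun k => hz.coeff_snd_eq_zero k.zero_le
    have hc : ‖c‖ = 1 := by
      have h₀ : c * conj c = 1 := by simpa [columnNormSq] using congrArg (eval 0) hnorm
      rw [Complex.mul_conj'] at h₀
      exact (pow_eq_one_iff_of_nonneg (norm_nonneg c) two_ne_zero).mp (by exact_mod_cast h₀)
    obtain ⟨θ, rfl⟩ := (Complex.norm_eq_one_iff c).mp hc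
    exact ⟨0, θ, by simp [qspPair, smul_eq_C_mul, mul_comm]⟩
  | succ n ih =>
    obtain ⟨φ, hφ⟩ := exists_isChebyshevPair_signal_phaseRotation hz hnorm
    obtain ⟨Φ, θ, hΦ⟩ := ih hφ (by rw [columnNormSq_signal, columnNormSq_phaseRotation, hnorm])
    refine ⟨fun | 0 => φ | i + 1 => Φ i, θ, ?_⟩
    calc z = phaseRotation φ (signal (signal (phaseRotation (-φ) z))) := by
          rw [signal_signal, phaseRotation_phaseRotation_neg]
      _ = _ := by rw [hΦ, signal_smul, phaseRotation_smul]; rfl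

theorem exists_qspPair_succ_fst_eq_smul (n : ℕ) (Φ : ℕ → ℝ) (θ : ℝ) :
    ∃ Ψ : ℕ → ℝ, (qspPair (n + 1) Ψ).1 = Complex.exp (Complex.I * θ) • (qspPair (n + 1) Φ).1 := by
  refine ⟨fun | 0 => θ + Φ 0 | i + 1 => Φ (i + 1), ?_⟩
  simp [qspPair, phaseRotation, smul_smul, mul_add, Complex.exp_add]

theorem exists_isChebyshevPair_re_eq {n : ℕ} {P : ℝ[X]} (hdeg : P.natDegree ≤ n)
    (hpar : HasParity n P) (hbound : ∀ x ∈ Set.Icc (-1 : ℝ) 1, |P.eval x| ≤ 1) :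
    ∃ z : ℂ[X] × ℂ[X], IsChebyshevPair n z ∧ columnNormSq z = 1 ∧
      (1 / 2 : ℂ) • (z.1 + (conjPair z).1) = P.map (algebraMap ℝ ℂ) := by
  obtain ⟨⟨B, D⟩, hBD, hcomplement⟩ : IsChebyshevNorm n (1 - P ^ 2) := by
    refine isChebyshevNorm_of_nonneg ?_ ⟨by simp [hpar.sq.comp_neg_X]⟩ fun x hx => ?_
    · exact (natDegree_sub_le _ _).trans (max_le (by simp) (natDegree_pow_le_of_le 2 hdeg))
    · simpa using hbound x hx
  set f := algebraMap ℝ ℂ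
  have hreal (Q : ℝ[X]) : (Q.map f).map (starRingEnd ℂ) = Q.map f := by
    rw [Polynomial.map_map]
    exact congrArg Q.map (RingHom.ext Complex.conj_ofReal)
  have hconj : (conjPair (P.map f + C Complex.I * B.map f, D.map f)).1 =
      P.map f - C Complex.I * B.map f := by
    simp only [conjPair, Polynomial.map_add, Polynomial.map_mul, map_C, hreal, Complex.conj_I,
      C_neg]
    ring
  refine ⟨(P.map f + C Complex.I * B.map f, D.map f), ⟨?_, ?_, ⟨?_⟩, hBD.parity_snd.map f⟩, ?_, ?_⟩
  · exact natDegree_add_le_of_degree_le (natDegree_map_le.trans hdeg)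
      ((natDegree_C_mul_le _ _).trans (natDegree_map_le.trans hBD.natDegree_fst))
  · simpa using (natDegree_map_le (f := f)).trans hBD.natDegree_X_mul_snd
  · simp only [add_comp, mul_comp, C_comp, (hpar.map f).comp_neg_X,
      (hBD.parity_fst.map f).comp_neg_X]
    ring
  · have hI : C Complex.I ^ 2 = (-1 : ℂ[X]) := by rw [← C_pow, Complex.I_sq, C_neg, C_1]
    have hcomplement' : 1 - P.map f ^ 2 = B.map f ^ 2 + (1 - X ^ 2) * D.map f ^ 2 := by
      simpa using congrArg (Polynomial.map f) hcomplement
    simp only [columnNormSq, Polynomial.map_add, Polynomial.map_mul, map_C, hreal, Complex.conj_I,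
      C_neg]
    linear_combination (-1 : ℂ[X]) * hcomplement' - (B.map f) ^ 2 * hI
  · rw [hconj, add_add_sub_cancel, ← two_smul ℂ, smul_smul,
      one_div_mul_cancel two_ne_zero, one_smul]

theorem exists_qspPair_succ_re_eq {n : ℕ} {P : ℝ[X]} (hdeg : P.natDegree ≤ n + 1)
    (hpar : HasParity (n + 1) P) (hbound : ∀ x ∈ Set.Icc (-1 : ℝ) 1, |P.eval x| ≤ 1) :
    ∃ Φ : ℕ → ℝ, (1 / 2 : ℂ) • ((qspPair (n + 1) Φ).1 + (qspPair (n + 1) fun i => -Φ i).1) =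
      P.map (algebraMap ℝ ℂ) := by
  obtain ⟨z, hz, hnorm, hre⟩ := exists_isChebyshevPair_re_eq hdeg hpar hbound
  obtain ⟨Φ, θ, rfl⟩ := exists_eq_smul_qspPair (n + 1) hz hnorm
  obtain ⟨Ψ, hΨ⟩ := exists_qspPair_succ_fst_eq_smul n Φ θ
  exact ⟨Ψ, by rw [qspPair_neg, conjPair, hΨ]; exact hre⟩

end SignalColumns

/-! ### Alternating phase modulation -/

section PhaseModulation

variable {m N : ℕ} {A : Matrix (Fin N) (Fin N) ℂ}
  {U V W : Matrix (Fin (2 ^ m) × Fin N) (Fin (2 ^ m) × Fin N) ℂ}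

/-- The compression `(⟨0|^{⊗m} ⊗ I_N) M (|0⟩^{⊗m} ⊗ I_N)`. -/
def compression (M : Matrix (Fin (2 ^ m) × Fin N) (Fin (2 ^ m) × Fin N) ℂ) :
    Matrix (Fin N) (Fin N) ℂ :=
  M.submatrix (Prod.mk 0) (Prod.mk 0)

/-- The isometry `|0⟩^{⊗m} ⊗ I_N`. -/
def zeroEmbedding (m N : ℕ) : Matrix (Fin (2 ^ m) × Fin N) (Fin N) ℂ :=
  (1 : Matrix (Fin (2 ^ m) × Fin N) (Fin (2 ^ m) × Fin N) ℂ).submatrix (Equiv.refl _) (Prod.mk 0)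

theorem compression_eq_mul (M : Matrix (Fin (2 ^ m) × Fin N) (Fin (2 ^ m) × Fin N) ℂ) :
    compression M = (zeroEmbedding m N)ᴴ * (M * zeroEmbedding m N) := by
  rw [zeroEmbedding, mul_submatrix_one, conjTranspose_submatrix, conjTranspose_one,
    one_submatrix_mul]
  rfl

theorem conjTranspose_zeroEmbedding_mul_self : (zeroEmbedding m N)ᴴ * zeroEmbedding m N = 1 := by
  have h := compression_eq_mul (1 : Matrix (Fin (2 ^ m) × Fin N) (Fin (2 ^ m) × Fin N) ℂ)
  rwa [Matrix.one_mul, compression, submatrix_one _ (Prod.mk_right_injective 0), eq_comm] at h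

theorem Proj0_eq_mul : Proj0 m N = zeroEmbedding m N * (zeroEmbedding m N)ᴴ := by
  ext ⟨a, j⟩ ⟨b, k⟩
  by_cases ha : a = 0 <;> by_cases hb : b = 0 <;>
    simp [Proj0, zeroEmbedding, Matrix.mul_apply, Matrix.one_apply, ha, hb, eq_comm]

theorem Proj0_mul_zeroEmbedding : Proj0 m N * zeroEmbedding m N = zeroEmbedding m N := by
  rw [Proj0_eq_mul, Matrix.mul_assoc, conjTranspose_zeroEmbedding_mul_self, Matrix.mul_one]

theorem conjTranspose_zeroEmbedding_mul_Proj0 :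
    (zeroEmbedding m N)ᴴ * Proj0 m N = (zeroEmbedding m N)ᴴ := by
  rw [Proj0_eq_mul, ← Matrix.mul_assoc, conjTranspose_zeroEmbedding_mul_self, Matrix.one_mul]

theorem phaseOp_mul_zeroEmbedding (φ : ℝ) :
    phaseOp m N φ * zeroEmbedding m N = Complex.exp (Complex.I * φ) • zeroEmbedding m N := by
  rw [phaseOp, Matrix.add_mul, Matrix.smul_mul, Matrix.smul_mul, Matrix.sub_mul, Matrix.one_mul,
    Proj0_mul_zeroEmbedding, sub_self, smul_zero, add_zero]

theorem phaseOp_mul_one_sub_Proj0 (φ : ℝ) :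
    phaseOp m N φ * (1 - Proj0 m N) = Complex.exp (-(Complex.I * φ)) • (1 - Proj0 m N) := by
  have hidem : IsIdempotentElem (Proj0 m N) := by
    rw [IsIdempotentElem, Proj0_eq_mul, ← Matrix.mul_assoc, ← Proj0_eq_mul, Proj0_mul_zeroEmbedding,
      ← Proj0_eq_mul]
  rw [phaseOp, add_mul, smul_mul_assoc, smul_mul_assoc, hidem.mul_one_sub_self, smul_zero, zero_add,
    hidem.one_sub.eq]

/-- The block column `E p(A) + (1 - Π) W E r(A)` with `E = |0⟩^{⊗m} ⊗ I_N` and `z = (p, r)`. When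
`A` is the compression of the unitary `W`, `(1 - Π) W E` plays the role of the factor `√(1 - x²)`
of `r`. -/
noncomputable def blockColumn (A : Matrix (Fin N) (Fin N) ℂ)
    (W : Matrix (Fin (2 ^ m) × Fin N) (Fin (2 ^ m) × Fin N) ℂ) (z : ℂ[X] × ℂ[X]) :
    Matrix (Fin (2 ^ m) × Fin N) (Fin N) ℂ :=
  zeroEmbedding m N * aeval A z.1 + (1 - Proj0 m N) * (W * (zeroEmbedding m N * aeval A z.2))

theorem conjTranspose_zeroEmbedding_mul_blockColumn (z : ℂ[X] × ℂ[X]) :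
    (zeroEmbedding m N)ᴴ * blockColumn A W z = aeval A z.1 := by
  rw [blockColumn, Matrix.mul_add, ← Matrix.mul_assoc, conjTranspose_zeroEmbedding_mul_self,
    Matrix.one_mul, ← Matrix.mul_assoc, Matrix.mul_sub, Matrix.mul_one,
    conjTranspose_zeroEmbedding_mul_Proj0, sub_self, Matrix.zero_mul, add_zero]

theorem phaseOp_mul_blockColumn (φ : ℝ) (z : ℂ[X] × ℂ[X]) :
    phaseOp m N φ * blockColumn A W z = blockColumn A W (phaseRotation φ z) := by
  rw [blockColumn, Matrix.mul_add, ← Matrix.mul_assoc, phaseOp_mul_zeroEmbedding,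
    ← Matrix.mul_assoc, phaseOp_mul_one_sub_Proj0]
  simp only [blockColumn, phaseRotation, map_smul, Matrix.mul_smul, Matrix.smul_mul]

theorem mul_blockColumn (hVW : V * W = 1) (hV : compression V = A) (hW : compression W = A)
    (z : ℂ[X] × ℂ[X]) : V * blockColumn A W z = blockColumn A V (signal z) := by
  set E := zeroEmbedding m N with hE
  have hProj {M : Matrix (Fin (2 ^ m) × Fin N) (Fin (2 ^ m) × Fin N) ℂ} (hM : compression M = A) :
      Proj0 m N * (M * E) = E * A := by
    rw [Proj0_eq_mul, Matrix.mul_assoc, ← compression_eq_mul, hM]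
  have hVE : V * E = E * A + (1 - Proj0 m N) * (V * E) := by
    rw [Matrix.sub_mul, Matrix.one_mul, hProj hV, add_sub_cancel]
  have hVWE : V * ((1 - Proj0 m N) * (W * E)) = E - V * E * A := by
    rw [Matrix.sub_mul, Matrix.one_mul, hProj hW, Matrix.mul_sub, ← Matrix.mul_assoc, hVW,
      Matrix.one_mul, Matrix.mul_assoc]
  calc V * blockColumn A W z
      = V * E * aeval A z.1 + V * ((1 - Proj0 m N) * (W * E)) * aeval A z.2 := by
        simp only [blockColumn, Matrix.mul_add, Matrix.mul_assoc, hE]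
    _ = V * E * (aeval A z.1 - A * aeval A z.2) + E * aeval A z.2 := by
        rw [hVWE]
        simp only [Matrix.mul_sub, Matrix.sub_mul, Matrix.mul_assoc]
        abel
    _ = (E * A + (1 - Proj0 m N) * (V * E)) * (aeval A z.1 - A * aeval A z.2) +
        E * aeval A z.2 := by rw [← hVE]
    _ = blockColumn A V (signal z) := by
        simp only [blockColumn, signal, map_add, map_sub, map_mul, map_one, aeval_X, sq,
          Matrix.mul_add, Matrix.add_mul, Matrix.mul_sub, Matrix.sub_mul, Matrix.mul_assoc,
          Matrix.one_mul, ← hE]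
        abel

theorem altPhaseSeq_two_mul_add_one (k : ℕ) (Φ : ℕ → ℝ) :
    altPhaseSeq m N U (2 * k + 1) Φ =
      phaseOp m N (Φ 1) * U * altPhaseSeq m N U (2 * k) fun i => Φ (i + 1) := by
  rw [altPhaseSeq, if_pos (by omega), altPhaseSeq, if_neg (by omega), Nat.add_sub_cancel]

theorem altPhaseSeq_two_mul_add_two (k : ℕ) (Φ : ℕ → ℝ) :
    altPhaseSeq m N U (2 * k + 2) Φ =
      phaseOp m N (Φ 1) * Uᴴ * altPhaseSeq m N U (2 * k + 1) fun i => Φ (i + 1) := by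
  rw [altPhaseSeq, if_neg (by omega), altPhaseSeq, if_pos (by omega), Nat.add_sub_cancel,
    show (2 * k + 2) / 2 = k + 1 by omega, Nat.mul_div_cancel_left k two_pos,
    List.range_succ_eq_map, List.map_cons, List.prod_cons, List.map_map]
  simp only [Matrix.mul_assoc, Function.comp_def, mul_add, Nat.succ_eq_add_one, Nat.mul_zero,
    zero_add, mul_one, add_assoc, Nat.reduceAdd]

theorem altPhaseSeq_succ (n : ℕ) (Φ : ℕ → ℝ) :
    altPhaseSeq m N U (n + 1) Φ =
      phaseOp m N (Φ 1) * star^[n] U * altPhaseSeq m N U n fun i => Φ (i + 1) := by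
  rcases Nat.even_or_odd' n with ⟨k, rfl | rfl⟩
  · rw [altPhaseSeq_two_mul_add_one, star_involutive.iterate_two_mul, id]
  · rw [altPhaseSeq_two_mul_add_two, star_involutive.iterate_two_mul_add_one, star_eq_conjTranspose]

theorem star_iterate_mem_unitary {R : Type*} [Monoid R] [StarMul R] {u : R} (hu : u ∈ unitary R)
    (n : ℕ) : star^[n] u ∈ unitary R :=
  Set.MapsTo.iterate (fun _ => Unitary.star_mem) n hu

theorem compression_star_iterate (hU : compression U = A) (hA : A.IsHermitian) (n : ℕ) :
    compression (star^[n] U) = A := by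
  have hsemiconj : Function.Semiconj (compression (m := m) (N := N)) star star := fun _ => rfl
  rw [hsemiconj.iterate_right n U, hU, Function.iterate_fixed (f := star) hA.isSelfAdjoint]

theorem altPhaseSeq_mul_zeroEmbedding (hU : U ∈ unitary _) (hUA : compression U = A)
    (hA : A.IsHermitian) (n : ℕ) (Φ : ℕ → ℝ) :
    altPhaseSeq m N U n Φ * zeroEmbedding m N =
      blockColumn A (star^[n + 1] U) (qspPair n fun i => Φ (i + 1)) := by
  induction n generalizing Φ with
  | zero => simp [altPhaseSeq, blockColumn, qspPair]
  | succ n ih =>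
    have hinv : star^[n] U * star^[n + 1] U = 1 := by
      rw [Function.iterate_succ_apply']
      exact Unitary.mul_star_self_of_mem (star_iterate_mem_unitary hU n)
    rw [altPhaseSeq_succ, Matrix.mul_assoc, ih, Matrix.mul_assoc,
      mul_blockColumn hinv (compression_star_iterate hUA hA _) (compression_star_iterate hUA hA _),
      phaseOp_mul_blockColumn, qspPair, Function.iterate_succ_apply', Function.iterate_succ_apply',
      star_star]

theorem compression_altPhaseSeq (hU : U ∈ unitary _) (hUA : compression U = A)
    (hA : A.IsHermitian) (n : ℕ) (Φ : ℕ → ℝ) :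
    compression (altPhaseSeq m N U n Φ) = aeval A (qspPair n fun i => Φ (i + 1)).1 := by
  rw [compression_eq_mul, altPhaseSeq_mul_zeroEmbedding hU hUA hA,
    conjTranspose_zeroEmbedding_mul_blockColumn]

end PhaseModulation

end

/-- singular value transformation by real polynomials. If
the compression `A` of a unitary `U` onto the all-zeros ancilla state is
Hermitian, and `P` is a real polynomial of degree at most `q`, parity `q mod 2`,
bounded by `1` on `[−1,1]`, then there are phases `Φ ∈ ℝ^q` such that the
compression of `(1/2)(U_Φ + U_{−Φ})` equals `P(A)`. -/
theorem exists_phases_qsvt (m N : ℕ) (hm : 1 ≤ m) (hN : 1 ≤ N)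
    (U : Matrix (Fin (2 ^ m) × Fin N) (Fin (2 ^ m) × Fin N) ℂ)
    (hU₁ : U * Uᴴ = 1) (hU₂ : Uᴴ * U = 1)
    (A : Matrix (Fin N) (Fin N) ℂ)
    (hA : ∀ j k : Fin N, A j k = U ((0 : Fin (2 ^ m)), j) ((0 : Fin (2 ^ m)), k))
    (hHerm : A.IsHermitian)
    (q : ℕ) (hq : 1 ≤ q) (P : Polynomial ℝ)
    (hdeg : P.natDegree ≤ q)
    (hpar : ∀ x : ℝ, P.eval (-x) = (-1 : ℝ) ^ q * P.eval x)
    (hbound : ∀ x ∈ Set.Icc (-1 : ℝ) 1, |P.eval x| ≤ 1) :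
    ∃ Φ : ℕ → ℝ,
      (Matrix.of fun j k : Fin N =>
        ((1 / 2 : ℂ) •
          (altPhaseSeq m N U q Φ + altPhaseSeq m N U q (fun i => -(Φ i))))
            ((0 : Fin (2 ^ m)), j) ((0 : Fin (2 ^ m)), k)) =
      Polynomial.aeval A P := by
  obtain ⟨n, rfl⟩ := Nat.exists_eq_add_of_le' hq
  have hparity : HasParity (n + 1) P := ⟨Polynomial.funext fun x => by simpa using hpar x⟩
  obtain ⟨Φ, hΦ⟩ := exists_qspPair_succ_re_eq hdeg hparity hbound
  have hU : U ∈ unitary _ := Unitary.mem_iff.mpr ⟨hU₂, hU₁⟩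
  have hUA : compression U = A := (Matrix.ext hA).symm
  refine ⟨fun i => Φ (i - 1), ?_⟩
  calc _ = (1 / 2 : ℂ) • (compression (altPhaseSeq m N U (n + 1) fun i => Φ (i - 1)) +
        compression (altPhaseSeq m N U (n + 1) fun i => -Φ (i - 1))) := rfl
    _ = Polynomial.aeval A ((1 / 2 : ℂ) •
        ((qspPair (n + 1) Φ).1 + (qspPair (n + 1) fun i => -Φ i).1)) := by
      simp only [compression_altPhaseSeq hU hUA hHerm, Nat.add_sub_cancel, map_smul, map_add]
    _ = Polynomial.aeval A P := by rw [hΦ, Polynomial.aeval_map_algebraMap]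

end QSVT
end
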